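/- In the correlated Erdős–Rényi detection problem with dense parent graph, for every fixed ε > 0 the following holds: if p_n ∈ (0,1) and s_n ∈ [0,1] satisfy (i) there exists δ > 0 with p_n ≤ 1 − δ for all n, (ii) log(1/p_n)/log n → 0 (i.e. p_n = n^{−o(1)}), and (iii) s_n² ≤ (2−ε)·log n / (n·p_n·(log(1/p_n) − 1 + p_n)) for all n, then TV(P_{n,p_n,s_n}, Q_{n,p_n,s_n}) → 0 as n → ∞; in particular even weak detection is impossible. -/

import Mathlib

/-!
The proof is a truncated second-moment argument. Given the permutation `π`, the likelihood ratio
of the planted against the null model is a product over edges of `1 + c ψ(A_e) ψ(B_{π(e)})` with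
`ψ` the centred indicator (`LR`, `P_real`). Under the null model, the product of the likelihood
ratios of `π` and `τ` has a mean that depends only on `σ = π⁻¹ τ`: expanding it, only the sets of
edges invariant under `σ` survive, each with weight `ρ²` per edge (`pair_sum`), so the mean is
governed by the orbits of `σ` on edges. Long orbits contribute `1 + o(1)`, the 2-cycles of `σ` a
bounded exponential moment (`inv_sum_le`, `orb_sum_le`, `mgf_cycles`), and a set of `k` fixed
points a factor `(1 + ρ²) ^ (k choose 2)`.

For `k` of order `n` this last factor is too large to be compensated by the probability `≤ 1/k!`
of `k` fixed points, so each likelihood ratio is restricted to the event `Good`: no set of `k ≥ m`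
vertices spans more than `ζ k` edges of the intersection graph of `A` and the relabelled `B`.
Under the planted model this event fails with probability at most `2 exp (-m)`, by a Chernoff and
a union bound (`bad_bound`). On it, the number `N` of common edges among the fixed points satisfies
`1 ≤ (1/p) ^ (ζ k - N)`, and inserting this factor replaces `(1 + ρ²) ^ (k choose 2)` by
`exp (ζ k log (1/p)) (1 + ρ² - s² (1 - p)) ^ (k choose 2)` (`pair_bound`). Since `ζ k` is close to
the mean `(k choose 2) p s²` when `k` is of order `n`, the exponent is about
`(k²/2) p s² (log (1/p) - 1 + p) ≤ (1 - ε/2) k log n`, which `1/k!` beats (`large_k`, `Hb_avg`).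
With `m = ⌈n ^ (1 - ε/16)⌉`, for fewer than `m` fixed points `ρ² m → 0` and no truncation is
needed. Hence the truncated second moment tends to `1`, and Cauchy–Schwarz (`TV_le`) yields the
convergence of the total variation distance to `0`.
-/

open MeasureTheory ProbabilityTheory Filter

noncomputable section

/-- The set of potential edges on `n` vertices: unordered pairs of distinct elements of `Fin n`. -/
abbrev Edge (n : ℕ) := {e : Sym2 (Fin n) // ¬ e.IsDiag}

instance (n : ℕ) : MeasurableSpace (Equiv.Perm (Fin n)) := ⊤

/-- The uniform distribution on permutations of `[n]`. -/
def permUniform (n : ℕ) : Measure (Equiv.Perm (Fin n)) :=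
  (PMF.uniformOfFintype (Equiv.Perm (Fin n))).toMeasure

/-- The action of a node permutation on edges, `π({i,j}) = {π(i), π(j)}`. -/
def edgeMap {n : ℕ} (π : Equiv.Perm (Fin n)) (e : Edge n) : Edge n :=
  ⟨Sym2.map π e.1, fun h => e.2 ((Sym2.isDiag_map π.injective).mp h)⟩

/-- The Bernoulli(p) distribution on `Bool` (a probability measure when `p ∈ [0,1]`). -/
def bern (p : ℝ) : Measure Bool :=
  ENNReal.ofReal p • Measure.dirac true + ENNReal.ofReal (1 - p) • Measure.dirac false

/-- i.i.d. Bernoulli(p) edge indicators. -/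
def bernEdges (n : ℕ) (p : ℝ) : Measure (Edge n → Bool) :=
  Measure.pi fun _ => bern p

/-- The null model `Q_{n,p,s}` of the correlated Erdős–Rényi problem: two independent families of
i.i.d. Bernoulli(ps) edge indicators. -/
def QER (n : ℕ) (p s : ℝ) : Measure ((Edge n → Bool) × (Edge n → Bool)) :=
  (bernEdges n (p * s)).prod (bernEdges n (p * s))

/-- The planted model `P_{n,p,s}`: draw `π` uniformly, a parent graph `G` with i.i.d. Bernoulli(p)
edges, and independent subsampling families `U`, `V` of i.i.d. Bernoulli(s); output
`A_e = G_e · U_e` and `B` with `B_{π(e)} = G_e · V_e`, i.e.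
`B_f = G_{π⁻¹(f)} · V_{π⁻¹(f)}`. -/
def PER (n : ℕ) (p s : ℝ) : Measure ((Edge n → Bool) × (Edge n → Bool)) :=
  Measure.map
    (fun ω : Equiv.Perm (Fin n) × (Edge n → Bool) × (Edge n → Bool) × (Edge n → Bool) =>
      (fun e => ω.2.1 e && ω.2.2.1 e,
       fun f => ω.2.1 (edgeMap ω.1⁻¹ f) && ω.2.2.2 (edgeMap ω.1⁻¹ f)))
    ((permUniform n).prod ((bernEdges n p).prod ((bernEdges n s).prod (bernEdges n s))))

/-- Total variation distance: `sup` over measurable sets `S` of `|P(S) - Q(S)|`. -/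
def TV {Ω : Type*} [MeasurableSpace Ω] (P Q : Measure Ω) : ℝ :=
  ⨆ S : {S : Set Ω // MeasurableSet S}, |(P S.1).toReal - (Q S.1).toReal|

/-! ### The likelihood ratio of a single edge -/

/-- The Bernoulli(`q`) mass function. -/
def bw (q : ℝ) (b : Bool) : ℝ := if b then q else 1 - q

/-- The centred Bernoulli(`q`) variable. -/
def psi (q : ℝ) (b : Bool) : ℝ := (if b then 1 else 0) - q

/-- The coefficient of the centred product in the single-edge likelihood ratio. -/
def cc (p s : ℝ) : ℝ := (1 - p) / (p * (1 - p * s) ^ 2)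

/-- The likelihood ratio of a single pair of matched edges: law of `(G U, G V)` against the product
of its marginals. The form `1 + c ψ(a) ψ(b)` avoids dividing by `s`, so `s = 0` is allowed. -/
def lr (p s : ℝ) (a b : Bool) : ℝ := 1 + cc p s * psi (p * s) a * psi (p * s) b

/-- The squared correlation coefficient of a matched pair of edges. -/
def rho2 (p s : ℝ) : ℝ := (s * (1 - p) / (1 - p * s)) ^ 2

theorem sum_bw (q : ℝ) : ∑ b, bw q b = 1 := by simp [bw]
theorem sum_bw_psi (q : ℝ) : ∑ b, bw q b * psi q b = 0 := by simp [bw, psi]; ring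
theorem sum_bw_psi2 (q : ℝ) : ∑ b, bw q b * (psi q b * psi q b) = q * (1 - q) := by
  simp [bw, psi]; ring

theorem bw_nonneg {q : ℝ} (h0 : 0 ≤ q) (h1 : q ≤ 1) (b : Bool) : 0 ≤ bw q b := by
  cases b <;> simp [bw] <;> linarith

section single
variable {p s : ℝ}

theorem ps_lt (hp : p ∈ Set.Ioo (0 : ℝ) 1) (hs : s ∈ Set.Icc (0 : ℝ) 1) :
    0 ≤ p * s ∧ p * s < 1 ∧ p * s ≤ s := by
  obtain ⟨h0, h1⟩ := hp; obtain ⟨h2, h3⟩ := hs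
  refine ⟨by positivity, by nlinarith, by nlinarith⟩

theorem cc_mul (hp : p ∈ Set.Ioo (0 : ℝ) 1) (hs : s ∈ Set.Icc (0 : ℝ) 1) :
    cc p s * (p * s * (1 - p * s)) = s * (1 - p) / (1 - p * s) := by
  have := ps_lt hp hs
  have h1 : 1 - p * s ≠ 0 := by linarith
  have h2 : p ≠ 0 := hp.1.ne'
  unfold cc; field_simp

theorem rho2_eq (hp : p ∈ Set.Ioo (0 : ℝ) 1) (hs : s ∈ Set.Icc (0 : ℝ) 1) :
    rho2 p s = cc p s ^ 2 * (p * s * (1 - p * s)) ^ 2 := by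
  rw [rho2, ← cc_mul hp hs]; ring

theorem lr_tt (hp : p ∈ Set.Ioo (0 : ℝ) 1) (hs : s ∈ Set.Icc (0 : ℝ) 1) :
    lr p s true true = 1 / p := by
  have := ps_lt hp hs
  have h1 : 1 - p * s ≠ 0 := by linarith
  have h2 : p ≠ 0 := hp.1.ne'
  simp only [lr, cc, psi]; field_simp; simp; ring

theorem lr_tf (hp : p ∈ Set.Ioo (0 : ℝ) 1) (hs : s ∈ Set.Icc (0 : ℝ) 1) :
    lr p s true false = (1 - s) / (1 - p * s) := by
  have := ps_lt hp hs
  have h1 : 1 - p * s ≠ 0 := by linarith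
  have h2 : p ≠ 0 := hp.1.ne'
  simp only [lr, cc, psi]; field_simp; simp; ring

theorem lr_ft (hp : p ∈ Set.Ioo (0 : ℝ) 1) (hs : s ∈ Set.Icc (0 : ℝ) 1) :
    lr p s false true = (1 - s) / (1 - p * s) := by
  rw [← lr_tf hp hs]; simp only [lr]; ring

theorem lr_nonneg (hp : p ∈ Set.Ioo (0 : ℝ) 1) (hs : s ∈ Set.Icc (0 : ℝ) 1)
    (a b : Bool) : 0 ≤ lr p s a b := by
  have h := ps_lt hp hs
  have h1 : 0 < 1 - p * s := by linarith
  have h2 : 0 < p := hp.1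
  have h3 : 0 ≤ 1 - s := by linarith [hs.2]
  cases a <;> cases b
  · have : 0 ≤ cc p s := by
      have : 0 < 1 - p := by linarith [hp.2]
      unfold cc; positivity
    simp only [lr, psi]; simp
    have := h.1
    have : 0 ≤ cc p s * (p * s) * (p * s) := by positivity
    linarith
  · rw [lr_ft hp hs]; positivity
  · rw [lr_tf hp hs]; positivity
  · rw [lr_tt hp hs]; positivity

/-- The law of `(G U, G V)` for a single edge has density `lr` with respect to the product of its
marginals. -/
theorem joint_eq (hp : p ∈ Set.Ioo (0 : ℝ) 1) (hs : s ∈ Set.Icc (0 : ℝ) 1) (a b : Bool) :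
    ∑ g, ∑ u, ∑ v, (if (g && u) = a ∧ (g && v) = b then bw p g * bw s u * bw s v else 0)
      = bw (p * s) a * bw (p * s) b * lr p s a b := by
  have h := ps_lt hp hs
  have h1 : 1 - p * s ≠ 0 := by linarith
  have h2 : p ≠ 0 := hp.1.ne'
  cases a <;> cases b
  · simp [bw, lr, cc, psi]; field_simp; ring
  · rw [lr_ft hp hs]; simp [bw]; field_simp
  · rw [lr_tf hp hs]; simp [bw]; field_simp
  · rw [lr_tt hp hs]; simp [bw]; field_simp

/-- The generating function of the event that both copies of an edge are present, under the planted
law. -/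
theorem chern_edge (hp : p ∈ Set.Ioo (0 : ℝ) 1) (hs : s ∈ Set.Icc (0 : ℝ) 1) (y : ℝ) :
    ∑ a, ∑ b, bw (p * s) a * bw (p * s) b * lr p s a b * (if a && b then y else 1)
      = 1 + p * s ^ 2 * (y - 1) := by
  have h := ps_lt hp hs
  have h1 : 1 - p * s ≠ 0 := by linarith
  have h2 : p ≠ 0 := hp.1.ne'
  simp only [Fintype.univ_bool, Finset.sum_insert, Finset.sum_singleton, Finset.mem_singleton,
    Bool.true_eq_false, not_false_eq_true, Bool.and_true, Bool.and_false, if_true,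
    lr_tt hp hs]
  simp [bw, lr, cc, psi]; field_simp; ring

/-- The expected squared likelihood ratio of one edge, tilted by a factor `y` when both copies
are present. -/
theorem second_edge (hp : p ∈ Set.Ioo (0 : ℝ) 1) (hs : s ∈ Set.Icc (0 : ℝ) 1) (y : ℝ) :
    ∑ b, bw (p * s) b * ∑ a, bw (p * s) a * (lr p s a b * lr p s a b * (if a && b then y else 1))
      = 1 + rho2 p s + s ^ 2 * (y - 1) := by
  have h := ps_lt hp hs
  have h1 : 1 - p * s ≠ 0 := by linarith
  have h2 : p ≠ 0 := hp.1.ne'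
  simp [bw, lr, cc, psi, rho2]; field_simp; ring

end single

/-- The action of a vertex permutation on edges, as a permutation. -/
def edgeEquiv {n : ℕ} (π : Equiv.Perm (Fin n)) : Equiv.Perm (Edge n) where
  toFun := edgeMap π
  invFun := edgeMap π⁻¹
  left_inv e := by
    apply Subtype.ext; simp [edgeMap, Sym2.map_map]
  right_inv e := by
    apply Subtype.ext; simp [edgeMap, Sym2.map_map]

@[simp] theorem edgeEquiv_apply {n : ℕ} (π : Equiv.Perm (Fin n)) (e : Edge n) :
    edgeEquiv π e = edgeMap π e := rfl

theorem edgeMap_mul {n : ℕ} (π τ : Equiv.Perm (Fin n)) (e : Edge n) :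
    edgeMap (π * τ) e = edgeMap π (edgeMap τ e) := by
  apply Subtype.ext; simp [edgeMap, Sym2.map_map, Function.comp_def]

/-! ### Mass functions of the two models -/

/-- The pairs of graphs that are observed. -/
abbrev Obs (n : ℕ) := (Edge n → Bool) × (Edge n → Bool)

/-- The mass function of the null model with edge density `q`. -/
def nullW (n : ℕ) (q : ℝ) (ω : Obs n) : ℝ := ∏ e, bw q (ω.1 e) * bw q (ω.2 e)

/-- The likelihood ratio of the planted model with known permutation `π`. -/
def LR {n : ℕ} (p s : ℝ) (π : Equiv.Perm (Fin n)) (ω : Obs n) : ℝ :=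
  ∏ e, lr p s (ω.1 e) (ω.2 (edgeMap π e))

instance bern_prob {p : ℝ} [h : Fact (p ∈ Set.Icc (0 : ℝ) 1)] : IsProbabilityMeasure (bern p) := by
  constructor
  have h0 := h.out.1
  have h1 := h.out.2
  simp only [bern, Measure.coe_add, Measure.coe_smul, Pi.add_apply, Pi.smul_apply,
    measure_univ, smul_eq_mul, mul_one]
  rw [← ENNReal.ofReal_add h0 (by linarith)]
  simp

theorem bern_real {p : ℝ} (h : p ∈ Set.Icc (0 : ℝ) 1) (b : Bool) : (bern p).real {b} = bw p b := by
  have h0 := h.1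
  have h1 : 0 ≤ 1 - p := by linarith [h.2]
  cases b <;> simp [Measure.real, bern, bw, h0, h1]

instance bernEdges_prob {n : ℕ} {p : ℝ} [h : Fact (p ∈ Set.Icc (0 : ℝ) 1)] :
    IsProbabilityMeasure (bernEdges n p) := by unfold bernEdges; infer_instance

theorem bernEdges_real (n : ℕ) {p : ℝ} (h : p ∈ Set.Icc (0 : ℝ) 1) (a : Edge n → Bool) :
    (bernEdges n p).real {a} = ∏ e, bw p (a e) := by
  have : Fact (p ∈ Set.Icc (0 : ℝ) 1) := ⟨h⟩
  rw [Measure.real, bernEdges, Measure.pi_singleton, ENNReal.toReal_prod]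
  exact Finset.prod_congr rfl fun e _ => bern_real h _

instance permUniform_prob {n : ℕ} : IsProbabilityMeasure (permUniform n) := by
  unfold permUniform; infer_instance

instance {n : ℕ} : MeasurableSingletonClass (Equiv.Perm (Fin n)) := ⟨fun _ => trivial⟩

theorem permUniform_real (n : ℕ) (π : Equiv.Perm (Fin n)) :
    (permUniform n).real {π} = ((n.factorial : ℝ))⁻¹ := by
  rw [Measure.real, permUniform, PMF.toMeasure_apply_singleton _ _ (measurableSet_singleton _)]
  simp [Fintype.card_perm]

theorem real_eq_sum {Ω : Type*} [Fintype Ω] [MeasurableSpace Ω] [MeasurableSingletonClass Ω]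
    (μ : Measure Ω) [IsFiniteMeasure μ] (S : Set Ω) [DecidablePred (· ∈ S)] :
    μ.real S = ∑ ω, if ω ∈ S then μ.real {ω} else 0 := by
  rw [← Finset.sum_filter, sum_measureReal_singleton]
  congr 1
  ext; simp

theorem prod_real_singleton {X Y : Type*} [MeasurableSpace X] [MeasurableSpace Y]
    (μ : Measure X) (ν : Measure Y) [SFinite ν] (x : X) (y : Y) :
    (μ.prod ν).real {(x, y)} = μ.real {x} * ν.real {y} := by
  rw [← Set.singleton_prod_singleton, measureReal_prod_prod]

open Classical in
/-- The null model has mass function `nullW`. -/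
theorem Q_real (n : ℕ) {p s : ℝ} (hp : p ∈ Set.Ioo (0 : ℝ) 1) (hs : s ∈ Set.Icc (0 : ℝ) 1)
    (S : Set (Obs n)) :
    (QER n p s S).toReal = ∑ ω, if ω ∈ S then nullW n (p * s) ω else 0 := by
  have h := ps_lt hp hs
  have hq : p * s ∈ Set.Icc (0 : ℝ) 1 := ⟨h.1, h.2.1.le⟩
  have : Fact (p * s ∈ Set.Icc (0 : ℝ) 1) := ⟨hq⟩
  rw [← Measure.real, QER, real_eq_sum]
  refine Finset.sum_congr rfl fun ω _ => ?_
  rw [show ω = (ω.1, ω.2) from rfl, prod_real_singleton, bernEdges_real n hq, bernEdges_real n hq,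
    nullW, Finset.prod_mul_distrib]

open Classical in
/-- The planted model with known permutation `π` has density `LR p s π` with respect to the null
model. -/
theorem joint_sum (n : ℕ) {p s : ℝ} (hp : p ∈ Set.Ioo (0 : ℝ) 1) (hs : s ∈ Set.Icc (0 : ℝ) 1)
    (π : Equiv.Perm (Fin n)) (ω : Obs n) :
    ∑ G : Edge n → Bool, ∑ U : Edge n → Bool, ∑ V : Edge n → Bool,
      (if ((fun e => G e && U e, fun f => G (edgeMap π⁻¹ f) && V (edgeMap π⁻¹ f)) : Obs n) = ω then
        (∏ e, bw p (G e)) * ((∏ e, bw s (U e)) * (∏ e, bw s (V e))) else 0)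
      = nullW n (p * s) ω * LR p s π ω := by
  have h1 : ∀ G U V : Edge n → Bool,
      (if ((fun e => G e && U e, fun f => G (edgeMap π⁻¹ f) && V (edgeMap π⁻¹ f)) : Obs n) = ω then
        (∏ e, bw p (G e)) * ((∏ e, bw s (U e)) * (∏ e, bw s (V e))) else 0) =
      ∏ e, (if (G e && U e) = ω.1 e ∧ (G e && V e) = ω.2 (edgeMap π e) then
        bw p (G e) * bw s (U e) * bw s (V e) else 0) := by
    intro G U V
    rw [Finset.prod_ite_zero]
    have : (((fun e => G e && U e, fun f => G (edgeMap π⁻¹ f) && V (edgeMap π⁻¹ f)) : Obs n) = ω)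
        ↔ ∀ i ∈ Finset.univ, (G i && U i) = ω.1 i ∧ (G i && V i) = ω.2 (edgeMap π i) := by
      rw [Prod.ext_iff]
      simp only [funext_iff, Finset.mem_univ, forall_true_left, forall_and]
      refine and_congr Iff.rfl ?_
      rw [← (edgeEquiv π).forall_congr_right]
      simp only [edgeEquiv_apply, ← edgeMap_mul, inv_mul_cancel]
      simp [edgeMap]
    simp only [this, Finset.prod_mul_distrib, mul_assoc]
  simp only [h1]
  have h2 : ∀ f : Edge n → Bool → Bool → Bool → ℝ,
      ∑ G : Edge n → Bool, ∑ U : Edge n → Bool, ∑ V : Edge n → Bool, ∏ e, f e (G e) (U e) (V e) =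
      ∏ e, ∑ g, ∑ u, ∑ v, f e g u v := by
    intro f
    simp only [Fintype.prod_sum]
  rw [h2 fun e g u v => if (g && u) = ω.1 e ∧ (g && v) = ω.2 (edgeMap π e) then
        bw p g * bw s u * bw s v else 0]
  simp only [joint_eq hp hs]
  rw [Finset.prod_mul_distrib, Finset.prod_mul_distrib, nullW, LR, Finset.prod_mul_distrib,
    ← Equiv.prod_comp (edgeEquiv π) (fun e => bw (p * s) (ω.2 e))]
  simp only [edgeEquiv_apply]

theorem sum_quad {X Y Z T : Type*} [Fintype X] [Fintype Y] [Fintype Z] [Fintype T]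
    (f : X × Y × Z × T → ℝ) : ∑ ω, f ω = ∑ x, ∑ y, ∑ z, ∑ t, f (x, y, z, t) := by
  simp only [Fintype.sum_prod_type]

open Classical in
/-- The planted model has the average of `LR p s π` over `π` as density with respect to the null
model. -/
theorem P_real (n : ℕ) {p s : ℝ} (hp : p ∈ Set.Ioo (0 : ℝ) 1) (hs : s ∈ Set.Icc (0 : ℝ) 1)
    (S : Set (Obs n)) :
    (PER n p s S).toReal = ∑ ω, if ω ∈ S then
      nullW n (p * s) ω * ((n.factorial : ℝ)⁻¹ * ∑ π, LR p s π ω) else 0 := by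
  have : Fact (p ∈ Set.Icc (0 : ℝ) 1) := ⟨hp.1.le, hp.2.le⟩
  have : Fact (s ∈ Set.Icc (0 : ℝ) 1) := ⟨hs⟩
  rw [← Measure.real, PER, map_measureReal_apply (measurable_of_finite _) (MeasurableSet.of_discrete),
    real_eq_sum]
  simp only [sum_quad, prod_real_singleton, permUniform_real,
    bernEdges_real n (Fact.out : p ∈ Set.Icc (0 : ℝ) 1), bernEdges_real n hs, Set.mem_preimage]
  have key : ∀ π : Equiv.Perm (Fin n), ∀ G U V : Edge n → Bool,
      (if ((fun e => G e && U e, fun f => G (edgeMap π⁻¹ f) && V (edgeMap π⁻¹ f)) : Obs n) ∈ S then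
        (n.factorial : ℝ)⁻¹ * ((∏ e, bw p (G e)) * ((∏ e, bw s (U e)) * (∏ e, bw s (V e)))) else 0)
      = ∑ ω : Obs n, if ω ∈ S then (n.factorial : ℝ)⁻¹ *
        (if ((fun e => G e && U e, fun f => G (edgeMap π⁻¹ f) && V (edgeMap π⁻¹ f)) : Obs n) = ω then
        (∏ e, bw p (G e)) * ((∏ e, bw s (U e)) * (∏ e, bw s (V e))) else 0) else 0 := by
    intro π G U V
    rw [Finset.sum_eq_single
      ((fun e => G e && U e, fun f => G (edgeMap π⁻¹ f) && V (edgeMap π⁻¹ f)) : Obs n)]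
    · simp
    · intro b _ hb
      simp [hb.symm]
    · simp
  simp only [key]
  have key2 : ∀ ω : Obs n, (if ω ∈ S then
      nullW n (p * s) ω * ((n.factorial : ℝ)⁻¹ * ∑ π, LR p s π ω) else 0) =
      ∑ π : Equiv.Perm (Fin n), ∑ G : Edge n → Bool, ∑ U : Edge n → Bool, ∑ V : Edge n → Bool,
      if ω ∈ S then (n.factorial : ℝ)⁻¹ *
        (if ((fun e => G e && U e, fun f => G (edgeMap π⁻¹ f) && V (edgeMap π⁻¹ f)) : Obs n) = ω then
        (∏ e, bw p (G e)) * ((∏ e, bw s (U e)) * (∏ e, bw s (V e))) else 0) else 0 := by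
    intro ω
    split_ifs
    · simp only [← Finset.mul_sum, joint_sum n hp hs]
      ring
    · simp
  simp only [key2]
  symm
  rw [Finset.sum_comm]
  refine Finset.sum_congr rfl fun π _ => ?_
  rw [Finset.sum_comm]
  refine Finset.sum_congr rfl fun G _ => ?_
  rw [Finset.sum_comm]
  refine Finset.sum_congr rfl fun U _ => ?_
  rw [Finset.sum_comm]

/-! ### Second moment of a pair of likelihood ratios -/

/-- The second moment of a pair of planted likelihood ratios whose permutations differ by `σ`,
tilted by `y` for each edge present in both graphs in a set `K` of fixed edges. Expanding the product over the
edges off `K`, only the `σ`-invariant subsets survive. -/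
theorem pair_sum {ι : Type*} [Fintype ι] [DecidableEq ι] {p s : ℝ}
    (hp : p ∈ Set.Ioo (0 : ℝ) 1) (hs : s ∈ Set.Icc (0 : ℝ) 1)
    (σ : Equiv.Perm ι) (K : Finset ι) (hK : ∀ e ∈ K, σ e = e) (y : ℝ) :
    ∑ a : ι → Bool, ∑ b : ι → Bool, (∏ e, bw (p * s) (a e) * bw (p * s) (b e)) *
      ((∏ e, lr p s (a e) (b e)) * (∏ e, lr p s (a e) (b (σ e))) *
        ∏ e ∈ K, (if a e && b e then y else 1))
    = (1 + rho2 p s + s ^ 2 * (y - 1)) ^ K.card *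
      ∑ S ∈ Kᶜ.powerset with S.map σ.toEmbedding = S, rho2 p s ^ S.card := by
  set q := p * s with hq
  set v := q * (1 - q) with hv
  set d := cc p s ^ 2 * v with hd
  set J : Bool → ℝ := fun b => ∑ a, bw q a * (lr p s a b * lr p s a b * (if a && b then y else 1))
    with hJ
  have hJbar : ∑ b, bw q b * J b = 1 + rho2 p s + s ^ 2 * (y - 1) := second_edge hp hs y
  have hR : ∀ (b b' : Bool), ∑ a, bw q a * (lr p s a b * lr p s a b') = 1 + d * (psi q b * psi q b') := by
    intro b b'
    have h0 := sum_bw q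
    have h1 := sum_bw_psi q
    have h2 := sum_bw_psi2 q
    simp only [Fintype.univ_bool, Finset.sum_insert, Finset.sum_singleton, Finset.mem_singleton,
      Bool.true_eq_false, not_false_eq_true] at h0 h1 h2 ⊢
    simp only [lr, hd, hv, ← hq]
    linear_combination h0 + (cc p s * psi q b + cc p s * psi q b') * h1 +
      cc p s ^ 2 * psi q b * psi q b' * h2
  -- Given `b`, the coordinates of `a` are independent and can be summed out edge by edge.
  have step1 : ∀ b : ι → Bool,
      ∑ a : ι → Bool, (∏ e, bw q (a e) * bw q (b e)) *
      ((∏ e, lr p s (a e) (b e)) * (∏ e, lr p s (a e) (b (σ e))) *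
        ∏ e ∈ K, (if a e && b e then y else 1)) =
      (∏ e, bw q (b e)) * ((∏ e ∈ K, J (b e)) *
        ∏ e ∈ Kᶜ, (1 + d * (psi q (b e) * psi q (b (σ e))))) := by
    intro b
    have e1 : ∀ a : ι → Bool, (∏ e, bw q (a e) * bw q (b e)) *
      ((∏ e, lr p s (a e) (b e)) * (∏ e, lr p s (a e) (b (σ e))) *
        ∏ e ∈ K, (if a e && b e then y else 1)) =
        (∏ e, bw q (b e)) * ∏ e, bw q (a e) * (lr p s (a e) (b e) * lr p s (a e) (b (σ e)) *
          if e ∈ K then (if a e && b e then y else 1) else 1) := by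
      intro a
      simp only [Finset.prod_mul_distrib]
      rw [Finset.prod_ite_mem, Finset.univ_inter]
      ring
    simp only [e1]
    rw [← Finset.mul_sum]
    congr 1
    rw [← Fintype.prod_sum (f := fun e a => bw q a * (lr p s a (b e) * lr p s a (b (σ e)) *
          if e ∈ K then (if a && b e then y else 1) else 1)), ← Finset.prod_mul_prod_compl K]
    congr 1
    · refine Finset.prod_congr rfl fun e he => ?_
      simp only [he, if_true, hK e he, hJ]
    · refine Finset.prod_congr rfl fun e he => ?_
      simp only [Finset.mem_compl] at he
      simp only [he, if_false, mul_one, hR]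
  rw [Finset.sum_comm]
  simp only [step1]
  -- In the expansion over `S`, a centred variable of `b` that occurs only once averages to zero,
  -- which leaves the sets with `σ S = S`.
  have step2 : ∀ S ∈ Kᶜ.powerset,
      ∑ b : ι → Bool, (∏ e, bw q (b e)) * ((∏ e ∈ K, J (b e)) *
        ∏ e ∈ S, (d * (psi q (b e) * psi q (b (σ e))))) =
      if S.map σ.toEmbedding = S then
        (1 + rho2 p s + s ^ 2 * (y - 1)) ^ K.card * rho2 p s ^ S.card else 0 := by
    intro S hS
    rw [Finset.mem_powerset] at hS
    have hSK : ∀ e ∈ K, e ∉ S := fun e he h => by simpa [he] using hS h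
    have hSK' : ∀ e ∈ K, e ∉ S.map σ.toEmbedding := by
      intro e he h
      obtain ⟨x, hx, hxe⟩ := Finset.mem_map.1 h
      have hx' : x = e := σ.injective ((by simpa using hxe : σ x = e).trans (hK e he).symm)
      exact hSK e he (hx' ▸ hx)
    have e1 : ∀ b : ι → Bool, (∏ e, bw q (b e)) * ((∏ e ∈ K, J (b e)) *
        ∏ e ∈ S, (d * (psi q (b e) * psi q (b (σ e))))) =
        d ^ S.card * ∏ e, bw q (b e) * ((if e ∈ K then J (b e) else 1) *
          ((if e ∈ S then psi q (b e) else 1) *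
            (if e ∈ S.map σ.toEmbedding then psi q (b e) else 1))) := by
      intro b
      have e2 : ∏ e ∈ S, psi q (b (σ e)) = ∏ e ∈ S.map σ.toEmbedding, psi q (b e) := by
        rw [Finset.prod_map]; rfl
      simp only [Finset.prod_mul_distrib, Finset.prod_ite_mem, Finset.univ_inter, e2,
        Finset.prod_const]
      ring
    simp only [e1]
    rw [← Finset.mul_sum, ← Fintype.prod_sum (f := fun e b => bw q b *
      ((if e ∈ K then J b else 1) * ((if e ∈ S then psi q b else 1) *
            (if e ∈ S.map σ.toEmbedding then psi q b else 1))))]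
    split_ifs with hinv
    · rw [hinv]
      have e3 : ∀ e, ∑ b, bw q b * ((if e ∈ K then J b else 1) * ((if e ∈ S then psi q b else 1) *
            (if e ∈ S then psi q b else 1))) =
          (if e ∈ K then (1 + rho2 p s + s ^ 2 * (y - 1)) else 1) * (if e ∈ S then v else 1) := by
        intro e
        by_cases h1 : e ∈ K
        · simp only [h1, hSK e h1, if_true, if_false, mul_one, hJbar]
        · by_cases h2 : e ∈ S
          · simp only [h1, h2, if_true, if_false, one_mul, sum_bw_psi2, hv]
          · simp only [h1, h2, if_false, mul_one, sum_bw]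
      simp only [e3, Finset.prod_mul_distrib, Finset.prod_ite_mem, Finset.univ_inter,
        Finset.prod_const]
      rw [rho2_eq hp hs, ← hq, ← hv, hd]
      ring_nf
    · have : ∃ e, ¬ (e ∈ S.map σ.toEmbedding ↔ e ∈ S) := by
        by_contra hcon
        push Not at hcon
        exact hinv (Finset.ext hcon)
      obtain ⟨e, he⟩ := this
      rw [Finset.prod_eq_zero (Finset.mem_univ e), mul_zero]
      have h1 : e ∉ K := fun h => he (by simp only [hSK e h, hSK' e h])
      by_cases h2 : e ∈ S
      · have h3 : e ∉ S.map σ.toEmbedding := fun h => he (by simp only [h, h2])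
        simp only [h1, h2, h3, if_true, if_false, one_mul, mul_one, sum_bw_psi]
      · have h3 : e ∈ S.map σ.toEmbedding := by tauto
        simp only [h1, h2, h3, if_true, if_false, one_mul, sum_bw_psi]
  simp only [Finset.prod_one_add, Finset.mul_sum]
  rw [Finset.sum_comm, Finset.sum_congr rfl (fun S hS => by simpa only [Finset.mul_sum] using step2 S hS),
    ← Finset.sum_filter]

/-- A lower bound for the size of the orbit of `e`: the orbit size capped at `3`. -/
def orbLB {ι : Type*} [DecidableEq ι] (σ : Equiv.Perm ι) (e : ι) : ℕ :=
  if σ e = e then 1 else if σ (σ e) = e then 2 else 3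

/-- The invariant subsets are unions of orbits, so their generating function is at most
`∏ (1 + y ^ |O|) ≤ exp (∑ y ^ |O|)` over orbits `O`. -/
theorem inv_sum_le {ι : Type*} [Fintype ι] [DecidableEq ι] (σ : Equiv.Perm ι) (T : Finset ι)
    {y : ℝ} (hy0 : 0 ≤ y) (hy1 : y ≤ 1) :
    ∑ S ∈ T.powerset with S.map σ.toEmbedding = S, y ^ S.card
      ≤ Real.exp (∑ e ∈ T, y ^ orbLB σ e) := by
  classical
  let r : ι → ι := fun e => (Quotient.mk (Equiv.Perm.SameCycle.setoid σ) e).out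
  have hr : ∀ e, σ.SameCycle (r e) e := fun e => Quotient.mk_out (s := Equiv.Perm.SameCycle.setoid σ) e
  have hr2 : ∀ e f, σ.SameCycle e f → r e = r f := fun e f h => by
    have : Quotient.mk (Equiv.Perm.SameCycle.setoid σ) e =
      Quotient.mk (Equiv.Perm.SameCycle.setoid σ) f := Quotient.sound h
    simp only [r, this]
  have hinv : ∀ S : Finset ι, S.map σ.toEmbedding = S → ∀ e f, σ.SameCycle e f → e ∈ S → f ∈ S := by
    intro S hS e f hef he
    have h1 : ∀ x, x ∈ S ↔ σ x ∈ S := by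
      intro x
      conv_rhs => rw [← hS]
      simp
    obtain ⟨k, rfl⟩ := hef.exists_pow_eq''.imp fun k h => h.2.2
    clear hef
    induction k with
    | zero => simpa using he
    | succ k ih => rw [pow_succ', Equiv.Perm.mul_apply]; exact (h1 _).1 ih
  let R : Finset ι := T.filter fun e => r e = e
  -- An invariant set contains the whole orbit of each of its representatives.
  have hcard : ∀ S ∈ T.powerset, S.map σ.toEmbedding = S →
      y ^ S.card ≤ ∏ e ∈ S.filter (fun e => r e = e), y ^ orbLB σ e := by
    intro S hS hSi
    rw [Finset.prod_pow_eq_pow_sum]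
    apply pow_le_pow_of_le_one hy0 hy1
    calc ∑ e ∈ S.filter (fun e => r e = e), orbLB σ e
        ≤ ∑ e ∈ S.filter (fun e => r e = e), (S.filter (fun f => r f = e)).card := by
          refine Finset.sum_le_sum fun e he => ?_
          rw [Finset.mem_filter] at he
          have m0 : e ∈ S.filter (fun f => r f = e) := by simp [he]
          have m1 : σ e ∈ S.filter (fun f => r f = e) := by
            have : σ.SameCycle e (σ e) := (Equiv.Perm.SameCycle.refl σ e).apply_right
            exact Finset.mem_filter.2 ⟨hinv S hSi e _ this he.1, by rw [← hr2 _ _ this, he.2]⟩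
          have m2 : σ (σ e) ∈ S.filter (fun f => r f = e) := by
            have : σ.SameCycle e (σ (σ e)) :=
              (Equiv.Perm.SameCycle.refl σ e).apply_right.apply_right
            exact Finset.mem_filter.2 ⟨hinv S hSi e _ this he.1, by rw [← hr2 _ _ this, he.2]⟩
          unfold orbLB
          split_ifs with h1 h2
          · exact Finset.card_pos.2 ⟨e, m0⟩
          · exact Finset.one_lt_card.2 ⟨e, m0, _, m1, fun h => h1 h.symm⟩
          · refine Finset.two_lt_card.2 ⟨e, m0, _, m1, _, m2, fun h => h1 h.symm,
              fun h => h2 h.symm, fun h => h1 (σ.injective h).symm⟩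
      _ = S.card := by
          rw [Finset.card_eq_sum_card_fiberwise (f := r) (t := S.filter (fun e => r e = e))]
          intro e he
          have he' : e ∈ S := by simpa using he
          have := hinv S hSi e (r e) (hr e).symm he'
          simp only [Finset.coe_filter, Set.mem_ofPred_eq]
          exact ⟨this, hr2 _ _ (hr e)⟩
  calc ∑ S ∈ T.powerset with S.map σ.toEmbedding = S, y ^ S.card
      ≤ ∑ S ∈ T.powerset with S.map σ.toEmbedding = S,
          ∏ e ∈ S.filter (fun e => r e = e), y ^ orbLB σ e := by
        refine Finset.sum_le_sum fun S hS => ?_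
        rw [Finset.mem_filter] at hS
        exact hcard S hS.1 hS.2
    _ = ∑ U ∈ (T.powerset.filter (fun S => S.map σ.toEmbedding = S)).image
          (fun S => S.filter (fun e => r e = e)), ∏ e ∈ U, y ^ orbLB σ e := by
        rw [Finset.sum_image]
        intro S hS S' hS' hSS
        simp only [Finset.coe_filter, Set.mem_ofPred_eq] at hS hS'
        have key : ∀ A B : Finset ι, A.map σ.toEmbedding = A → B.map σ.toEmbedding = B →
            A.filter (fun e => r e = e) = B.filter (fun e => r e = e) → A ⊆ B := by
          intro A B hA hB hAB e he
          have h1 : r e ∈ A.filter (fun e => r e = e) :=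
            Finset.mem_filter.2 ⟨hinv A hA _ _ (hr e).symm he, hr2 _ _ (hr e)⟩
          rw [hAB] at h1
          exact hinv B hB _ _ (hr e) (Finset.mem_filter.1 h1).1
        exact Finset.Subset.antisymm (key _ _ hS.2 hS'.2 hSS) (key _ _ hS'.2 hS.2 hSS.symm)
    _ ≤ ∑ U ∈ T.powerset, ∏ e ∈ U, y ^ orbLB σ e := by
        refine Finset.sum_le_sum_of_subset_of_nonneg ?_ fun U _ _ =>
          Finset.prod_nonneg fun e _ => by positivity
        intro U hU
        obtain ⟨S, hS, rfl⟩ := Finset.mem_image.1 hU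
        rw [Finset.mem_filter, Finset.mem_powerset] at hS
        exact Finset.mem_powerset.2 ((Finset.filter_subset _ _).trans hS.1)
    _ = ∏ e ∈ T, (1 + y ^ orbLB σ e) := (Finset.prod_one_add _).symm
    _ ≤ ∏ e ∈ T, Real.exp (y ^ orbLB σ e) := by
        refine Finset.prod_le_prod (fun e _ => by positivity) fun e _ => ?_
        rw [add_comm]; exact Real.add_one_le_exp _
    _ = _ := (Real.exp_sum _ _).symm

/-! ### Short cycles and short edge orbits of permutations -/

/-- The fixed points of a permutation. -/
def fixF {n : ℕ} (σ : Equiv.Perm (Fin n)) : Finset (Fin n) := Finset.univ.filter fun i => σ i = i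

/-- The smaller elements of the 2-cycles of a permutation. -/
def twoF {n : ℕ} (σ : Equiv.Perm (Fin n)) : Finset (Fin n) :=
  Finset.univ.filter fun i => i < σ i ∧ σ (σ i) = i

open Classical in
/-- The edges with both endpoints in `S`. -/
def edgesIn {n : ℕ} (S : Finset (Fin n)) : Finset (Edge n) :=
  Finset.univ.filter fun e => ∀ v ∈ e.1, v ∈ S

theorem card_edgesIn {n : ℕ} (S : Finset (Fin n)) : (edgesIn S).card = S.card.choose 2 := by
  classical
  rw [← Sym2.card_image_offDiag, ← Finset.card_image_of_injective _ Subtype.val_injective]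
  congr 1
  ext e
  induction e with | _ i j
  simp only [edgesIn, Finset.mem_image, Finset.mem_filter, Finset.mem_univ, true_and, Subtype.exists,
    Finset.mem_offDiag, Prod.exists]
  constructor
  · rintro ⟨e, he, h, rfl⟩
    exact ⟨i, j, ⟨h i (by simp), h j (by simp), by simpa using he⟩, rfl⟩
  · rintro ⟨a, b, ⟨ha, hb, hab⟩, h⟩
    rw [← h]
    refine ⟨s(a, b), by simpa using hab, ?_, rfl⟩
    intro v hv
    rcases Sym2.mem_iff.1 hv with rfl | rfl <;> assumption

theorem edgesIn_fix {n : ℕ} (σ : Equiv.Perm (Fin n)) : ∀ e ∈ edgesIn (fixF σ), edgeEquiv σ e = e := by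
  intro e he
  obtain ⟨e, he'⟩ := e
  induction e with | _ i j
  simp only [edgesIn, fixF, Finset.mem_filter, Finset.mem_univ, true_and] at he
  apply Subtype.ext
  simp [edgeMap, he i (by simp), he j (by simp)]

theorem card_edge_le (n : ℕ) : Fintype.card (Edge n) ≤ n ^ 2 := by
  classical
  have h := card_edgesIn (Finset.univ : Finset (Fin n))
  have h2 : edgesIn (Finset.univ : Finset (Fin n)) = Finset.univ := by
    simp [edgesIn]
  rw [h2, Finset.card_univ, Finset.card_univ, Fintype.card_fin] at h
  rw [h]
  exact Nat.choose_le_pow n 2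

open Classical in
/-- The edges fixed by `σ` that are not inside its fixed-point set are the 2-cycles of `σ`. -/
theorem card_swapped {n : ℕ} (σ : Equiv.Perm (Fin n)) :
    ((edgesIn (fixF σ))ᶜ.filter fun e => edgeEquiv σ e = e).card ≤ (twoF σ).card := by
  rw [← Finset.card_image_of_injective _ Subtype.val_injective]
  refine (Finset.card_le_card (t := (twoF σ).image fun i => s(i, σ i)) ?_).trans Finset.card_image_le
  intro e he
  induction e with | _ i j
  simp only [Finset.mem_image, Finset.mem_filter, Finset.mem_compl, Subtype.exists, edgesIn, fixF,
    Finset.mem_univ, true_and] at he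
  obtain ⟨e, hd, ⟨h1, h2⟩, rfl⟩ := he
  have h3 : s(σ i, σ j) = s(i, j) := by
    have := congrArg Subtype.val h2
    simpa [edgeMap] using this
  have hij : i ≠ j := by simpa using hd
  rw [Sym2.eq_iff] at h3
  simp only [Finset.mem_image, twoF, Finset.mem_filter, Finset.mem_univ, true_and]
  rcases h3 with ⟨h4, h5⟩ | ⟨h4, h5⟩
  · exact absurd (fun v hv => by rcases Sym2.mem_iff.1 hv with rfl | rfl <;> assumption) h1
  · rcases lt_or_gt_of_ne hij with h | h
    · exact ⟨i, ⟨by rw [h4]; exact h, by rw [h4, h5]⟩, by rw [h4]⟩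
    · exact ⟨j, ⟨by rw [h5]; exact h, by rw [h5, h4]⟩, by rw [h5, Sym2.eq_swap]⟩

open Classical in
/-- An edge in an orbit of length 2 either meets a 2-cycle or is a diagonal of a 4-cycle. -/
theorem card_two_orbit {n : ℕ} (σ : Equiv.Perm (Fin n)) :
    (Finset.univ.filter fun e => edgeEquiv σ e ≠ e ∧ edgeEquiv σ (edgeEquiv σ e) = e).card
      ≤ 2 * (twoF σ).card * n + n := by
  rw [← Finset.card_image_of_injective _ Subtype.val_injective]
  have hsub : (Finset.univ.filter fun e => edgeEquiv σ e ≠ e ∧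
      edgeEquiv σ (edgeEquiv σ e) = e).image Subtype.val ⊆
      ((((twoF σ) ∪ (twoF σ).image σ) ×ˢ (Finset.univ : Finset (Fin n))).image
        fun x => s(x.1, x.2)) ∪ (Finset.univ : Finset (Fin n)).image fun i => s(i, σ (σ i)) := by
    intro e he
    induction e with | _ i j
    simp only [Finset.mem_image, Finset.mem_filter, Subtype.exists, Finset.mem_univ, true_and] at he
    obtain ⟨e, hd, ⟨h1, h2⟩, rfl⟩ := he
    have h3 : s(σ (σ i), σ (σ j)) = s(i, j) := by
      have := congrArg Subtype.val h2
      simpa [edgeMap] using this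
    have h1' : ¬ (σ i = i ∧ σ j = j) := by
      rintro ⟨ha, hb⟩
      exact h1 (Subtype.ext (by simp [edgeMap, ha, hb]))
    have key : ∀ i, σ (σ i) = i → σ i ≠ i → i ∈ twoF σ ∪ (twoF σ).image σ := by
      intro i ha hb
      simp only [Finset.mem_union, Finset.mem_image, twoF, Finset.mem_filter, Finset.mem_univ,
        true_and]
      rcases lt_or_gt_of_ne hb with h | h
      · exact Or.inr ⟨σ i, ⟨by rw [ha]; exact h, by rw [ha]⟩, ha⟩
      · exact Or.inl ⟨h, ha⟩
    simp only [Finset.mem_union (s := Finset.image _ _), Finset.mem_image (b := s(i, j)),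
      Finset.mem_product, Finset.mem_univ, and_true, true_and, Prod.exists]
    rw [Sym2.eq_iff] at h3
    rcases h3 with ⟨h4, h5⟩ | ⟨h4, h5⟩
    · left
      by_cases hi : σ i = i
      · exact ⟨j, i, key j h5 (fun h => h1' ⟨hi, h⟩), Sym2.eq_swap⟩
      · exact ⟨i, j, key i h4 hi, rfl⟩
    · right
      exact ⟨i, by rw [h4]⟩
  refine (Finset.card_le_card hsub).trans ((Finset.card_union_le _ _).trans ?_)
  refine add_le_add (Finset.card_image_le.trans ?_) (Finset.card_image_le.trans (by simp))
  rw [Finset.card_product, Finset.card_univ, Fintype.card_fin]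
  refine Nat.mul_le_mul_right _ ((Finset.card_union_le _ _).trans ?_)
  have : ((twoF σ).image σ).card ≤ (twoF σ).card := Finset.card_image_le
  omega

/-- Outside the edges between fixed points, the number of fixed edges is at most the number of
2-cycles, and orbits of length 2 are controlled by `card_two_orbit`; all other edges lie in orbits
of length at least 3. -/
theorem orb_sum_le {n : ℕ} (σ : Equiv.Perm (Fin n)) {y : ℝ} (hy0 : 0 ≤ y) :
    ∑ e ∈ (edgesIn (fixF σ))ᶜ, y ^ orbLB (edgeEquiv σ) e ≤
      (y + 2 * n * y ^ 2) * (twoF σ).card + (n * y ^ 2 + n ^ 2 * y ^ 3) := by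
  classical
  set T := (edgesIn (fixF σ))ᶜ
  have h : ∀ e ∈ T, y ^ orbLB (edgeEquiv σ) e ≤ (if edgeEquiv σ e = e then y else 0) +
      (if edgeEquiv σ e ≠ e ∧ edgeEquiv σ (edgeEquiv σ e) = e then y ^ 2 else 0) + y ^ 3 := by
    intro e _
    have : 0 ≤ y ^ 2 := by positivity
    have : 0 ≤ y ^ 3 := by positivity
    unfold orbLB
    split_ifs <;> simp_all
  refine (Finset.sum_le_sum h).trans ?_
  rw [Finset.sum_add_distrib, Finset.sum_add_distrib, ← Finset.sum_filter, ← Finset.sum_filter,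
    Finset.sum_const, Finset.sum_const, Finset.sum_const]
  simp only [nsmul_eq_mul]
  have a1 : (((T.filter fun e => edgeEquiv σ e = e).card : ℕ) : ℝ) ≤ (twoF σ).card := by
    exact_mod_cast card_swapped σ
  have a2 : (((T.filter fun e => edgeEquiv σ e ≠ e ∧ edgeEquiv σ (edgeEquiv σ e) = e).card : ℕ) : ℝ)
      ≤ 2 * (twoF σ).card * n + n := by
    have := (Finset.card_le_card (Finset.filter_subset_filter _ (Finset.subset_univ T))).trans
      (card_two_orbit σ)
    exact_mod_cast this
  have a3 : ((T.card : ℕ) : ℝ) ≤ n ^ 2 := by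
    exact_mod_cast (Finset.card_le_univ T).trans (card_edge_le n)
  have b1 := mul_le_mul_of_nonneg_right a1 hy0
  have b2 := mul_le_mul_of_nonneg_right a2 (by positivity : 0 ≤ y ^ 2)
  have b3 := mul_le_mul_of_nonneg_right a3 (by positivity : 0 ≤ y ^ 3)
  nlinarith

/-- Permutations that contain `j` disjoint copies of the pattern `c` have proportion at most `1/j!`.
With `κ` the disjoint union of `j` copies of `c`, there are exactly `n!` pairs `(σ, t)` with
`σ ∘ t = t ∘ κ`, and each `σ ∈ B` occurs in at least `j!` of them, by permuting the copies. -/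
theorem count_pattern {n j : ℕ} {X : Type*} [Fintype X] [Nonempty X] (c : Equiv.Perm X)
    (B : Finset (Equiv.Perm (Fin n)))
    (hB : ∀ σ ∈ B, ∃ t : Fin j × X ↪ Fin n, ∀ x, σ (t x) = t (x.1, c x.2)) :
    B.card * j.factorial ≤ n.factorial := by
  classical
  rcases isEmpty_or_nonempty (Fin j × X ↪ Fin n) with hE | hE
  · have : B = ∅ := Finset.eq_empty_of_forall_notMem fun σ hσ => hE.elim (hB σ hσ).choose
    simp [this]
  let κ : Equiv.Perm (Fin j × X) := (Equiv.refl (Fin j)).prodCongr c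
  let I : Finset (Equiv.Perm (Fin n) × (Fin j × X ↪ Fin n)) :=
    Finset.univ.filter fun z => ∀ x, z.1 (z.2 x) = z.2 (κ x)
  have h1 : B.card * j.factorial ≤ I.card := by
    choose! t ht using hB
    let f : Equiv.Perm (Fin n) × Equiv.Perm (Fin j) → Equiv.Perm (Fin n) × (Fin j × X ↪ Fin n) :=
      fun z => (z.1, (z.2.prodCongr (Equiv.refl X)).toEmbedding.trans (t z.1))
    have : (B ×ˢ (Finset.univ : Finset (Equiv.Perm (Fin j)))).card ≤ I.card := by
      refine Finset.card_le_card_of_injOn f ?_ ?_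
      · intro z hz
        simp only [Finset.coe_product, Set.mem_prod, Finset.mem_coe] at hz
        simp only [I, f, Finset.coe_filter, Set.mem_ofPred_eq, Finset.mem_univ, true_and]
        intro x
        exact ht z.1 hz.1 (z.2 x.1, x.2)
      · intro z hz w hw hzw
        simp only [f, Prod.mk.injEq] at hzw
        obtain ⟨e1, e2⟩ := hzw
        refine Prod.ext e1 (Equiv.ext fun i => ?_)
        have x0 : X := Classical.arbitrary X
        have := DFunLike.congr_fun e2 (i, x0)
        rw [e1] at this
        have := (t w.1).injective this
        exact (Prod.ext_iff.1 this).1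
    rwa [Finset.card_product, Finset.card_univ, Fintype.card_perm, Fintype.card_fin] at this
  refine h1.trans ?_
  -- The number of `σ` with `σ ∘ t = v` does not depend on `v`, so `v = t ∘ κ` gets a share
  -- `1 / #E` of the `n!` permutations.
  let E := Fin j × X ↪ Fin n
  let N : E → E → ℕ := fun t v => (Finset.univ.filter fun σ : Equiv.Perm (Fin n) => ∀ x, σ (t x) = v x).card
  have hN : ∀ t v w : E, N t v = N t w := by
    have key : ∀ t v w : E, N t v ≤ N t w := by
      intro t v w
      let τ : Equiv.Perm (Fin n) :=
        (v.toEquivRange.symm.trans w.toEquivRange).extendSubtype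
      have hτ : ∀ x, τ (v x) = w x := by
        intro x
        have := Equiv.extendSubtype_apply_of_mem (v.toEquivRange.symm.trans w.toEquivRange) (v x)
          ⟨x, rfl⟩
        rw [this]
        have h2 : (⟨v x, ⟨x, rfl⟩⟩ : Set.range v) = v.toEquivRange x := rfl
        rw [h2]
        simp
      refine Finset.card_le_card_of_injOn (fun σ => τ * σ) ?_ fun a _ b _ h => mul_left_cancel h
      intro σ hσ
      simp only [Finset.coe_filter, Set.mem_ofPred_eq, Finset.mem_univ, true_and] at hσ ⊢
      intro x
      rw [Equiv.Perm.mul_apply, hσ, hτ]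
    exact fun t v w => le_antisymm (key t v w) (key t w v)
  have hs : ∀ t : E, ∑ v : E, N t v = n.factorial := by
    intro t
    have : n.factorial = (Finset.univ : Finset (Equiv.Perm (Fin n))).card := by
      rw [Finset.card_univ, Fintype.card_perm, Fintype.card_fin]
    rw [this, Finset.card_eq_sum_card_fiberwise (f := fun σ => t.trans σ.toEmbedding)
      (t := Finset.univ) (by simp)]
    refine Finset.sum_congr rfl fun v _ => ?_
    simp only [N]
    congr 1
    ext σ
    simp [DFunLike.ext_iff]
  have hN2 : ∀ t v : E, Fintype.card E * N t v = n.factorial := by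
    intro t v
    rw [← hs t, Finset.sum_congr rfl fun w _ => hN t w v, Finset.sum_const, Finset.card_univ,
      smul_eq_mul]
  have hI : I.card = ∑ t : E, N t (κ.toEmbedding.trans t) := by
    rw [Finset.card_eq_sum_card_fiberwise (f := Prod.snd) (t := Finset.univ) (by simp)]
    refine Finset.sum_congr rfl fun t _ => ?_
    refine Finset.card_bij' (fun z _ => z.1) (fun σ _ => (σ, t)) ?_ ?_ ?_ ?_
    · intro z hz
      simp only [I, Finset.mem_filter, Finset.mem_univ, true_and] at hz ⊢
      intro x
      rw [← hz.2]
      exact hz.1 x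
    · intro σ hσ
      simp only [I, Finset.mem_filter, Finset.mem_univ, true_and] at hσ ⊢
      exact ⟨hσ, trivial⟩
    · intro z hz
      simp only [Finset.mem_filter] at hz
      exact Prod.ext rfl hz.2.symm
    · intro σ _
      rfl
  have hpos : 0 < Fintype.card E := Fintype.card_pos
  refine le_of_eq (Nat.eq_of_mul_eq_mul_left hpos ?_)
  rw [hI, Finset.mul_sum, Finset.sum_congr rfl fun t _ => hN2 t _, Finset.sum_const,
    Finset.card_univ, smul_eq_mul]

open Classical in
theorem card_fix_ge {n : ℕ} (k : ℕ) :
    (Finset.univ.filter fun σ : Equiv.Perm (Fin n) => k ≤ (fixF σ).card).card * k.factorial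
      ≤ n.factorial := by
  refine count_pattern (X := Unit) (Equiv.refl _) _ fun σ hσ => ?_
  simp only [Finset.mem_filter, Finset.mem_univ, true_and] at hσ
  obtain ⟨U, hU, hUc⟩ := Finset.exists_subset_card_eq hσ
  let f := U.orderEmbOfFin hUc
  refine ⟨⟨fun x => f x.1, fun x y h => Prod.ext (f.injective h) rfl⟩, fun x => ?_⟩
  have : f x.1 ∈ fixF σ := hU (Finset.orderEmbOfFin_mem U hUc x.1)
  simp only [fixF, Finset.mem_filter, Finset.mem_univ, true_and] at this
  exact this

open Classical in
theorem card_two_ge {n : ℕ} (k : ℕ) :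
    (Finset.univ.filter fun σ : Equiv.Perm (Fin n) => k ≤ (twoF σ).card).card * k.factorial
      ≤ n.factorial := by
  refine count_pattern (X := Bool) Equiv.boolNot _ fun σ hσ => ?_
  simp only [Finset.mem_filter, Finset.mem_univ, true_and] at hσ
  obtain ⟨U, hU, hUc⟩ := Finset.exists_subset_card_eq hσ
  let f := U.orderEmbOfFin hUc
  have hf : ∀ i, f i < σ (f i) ∧ σ (σ (f i)) = f i := by
    intro i
    have : f i ∈ twoF σ := hU (Finset.orderEmbOfFin_mem U hUc i)
    simpa only [twoF, Finset.mem_filter, Finset.mem_univ, true_and] using this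
  have hne : ∀ i j, f i ≠ σ (f j) := by
    intro i j h
    have h1 := hf i
    have h2 := hf j
    rw [h, h2.2] at h1
    exact lt_asymm h1.1 h2.1
  refine ⟨⟨fun x => if x.2 then σ (f x.1) else f x.1, ?_⟩, ?_⟩
  · rintro ⟨i, a⟩ ⟨j, b⟩ h
    cases a <;> cases b <;> simp at h
    · simp [h]
    · exact absurd h (hne _ _)
    · exact absurd h.symm (hne _ _)
    · simp [h]
  · rintro ⟨i, a⟩
    cases a
    · rfl
    · exact (hf i).2

/-! ### Exponential moments of cycle counts, and the truncated second moment -/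

/-- Tails bounded by `1/k!` give a Poisson-type exponential moment. -/
theorem mgf_aux {n : ℕ} (X : Equiv.Perm (Fin n) → ℕ)
    (hX : ∀ k, (Finset.univ.filter fun σ => k ≤ X σ).card * k.factorial ≤ n.factorial) :
    ∑ σ, Real.exp (2 * X σ) ≤ n.factorial * Real.exp (Real.exp 2) := by
  classical
  obtain ⟨N, hN⟩ : ∃ N, ∀ σ, X σ < N := by
    refine ⟨(Finset.univ.sup X) + 1, fun σ => Nat.lt_succ_of_le (Finset.le_sup (Finset.mem_univ σ))⟩
  calc ∑ σ, Real.exp (2 * X σ)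
      ≤ ∑ σ, ∑ k ∈ Finset.range N, if k ≤ X σ then Real.exp 2 ^ k else 0 := by
        refine Finset.sum_le_sum fun σ _ => ?_
        have h1 : Real.exp (2 * X σ) = if X σ ≤ X σ then Real.exp 2 ^ (X σ) else 0 := by
          rw [if_pos le_rfl, ← Real.exp_nat_mul]; ring_nf
        rw [h1]
        exact Finset.single_le_sum (f := fun k => if k ≤ X σ then Real.exp 2 ^ k else 0)
          (fun k _ => by positivity) (Finset.mem_range.2 (hN σ))
    _ = ∑ k ∈ Finset.range N, (Finset.univ.filter fun σ => k ≤ X σ).card * Real.exp 2 ^ k := by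
        rw [Finset.sum_comm]
        refine Finset.sum_congr rfl fun k _ => ?_
        rw [← Finset.sum_filter, Finset.sum_const, nsmul_eq_mul]
    _ ≤ ∑ k ∈ Finset.range N, n.factorial * (Real.exp 2 ^ k / k.factorial) := by
        refine Finset.sum_le_sum fun k _ => ?_
        have h : (((Finset.univ.filter fun σ => k ≤ X σ).card : ℕ) : ℝ) * k.factorial ≤ n.factorial := by
          exact_mod_cast hX k
        have hk : (0 : ℝ) < k.factorial := by exact_mod_cast k.factorial_pos
        rw [← mul_div_assoc, le_div_iff₀ hk]
        have := mul_le_mul_of_nonneg_right h (by positivity : 0 ≤ Real.exp 2 ^ k)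
        nlinarith
    _ ≤ _ := by
        rw [← Finset.mul_sum]
        gcongr
        exact Real.sum_le_exp_of_nonneg (Real.exp_pos 2).le N

/-- The numbers of fixed points and 2-cycles have exponential moments close to `1` for small `η`,
uniformly in `n`. -/
theorem mgf_cycles {n : ℕ} {η : ℝ} (h0 : 0 ≤ η) (h1 : η ≤ 1) :
    (n.factorial : ℝ)⁻¹ * ∑ σ : Equiv.Perm (Fin n),
      Real.exp (η * ((fixF σ).card + (twoF σ).card)) ≤ 1 + η * Real.exp (Real.exp 2) := by
  have hn : (0 : ℝ) < n.factorial := by exact_mod_cast n.factorial_pos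
  rw [inv_mul_le_iff₀ hn]
  have a1 := mgf_aux (n := n) (fun σ => (fixF σ).card) (fun k => by
    convert card_fix_ge (n := n) k)
  have a2 := mgf_aux (n := n) (fun σ => (twoF σ).card) (fun k => by
    convert card_two_ge (n := n) k)
  have hpt : ∀ σ : Equiv.Perm (Fin n), Real.exp (η * ((fixF σ).card + (twoF σ).card)) ≤
      1 + η * ((Real.exp (2 * (fixF σ).card) + Real.exp (2 * (twoF σ).card)) / 2) := by
    intro σ
    set x : ℝ := (((fixF σ).card : ℕ) : ℝ)
    set y : ℝ := (((twoF σ).card : ℕ) : ℝ)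
    have b1 : Real.exp (η * (x + y)) ≤ 1 + η * (Real.exp (x + y) - 1) := by
      have := rpow_one_add_le_one_add_mul_self (s := Real.exp (x + y) - 1) (p := η)
        (by linarith [Real.exp_pos (x + y)]) h0 h1
      rw [add_sub_cancel, ← Real.exp_mul, mul_comm] at this
      exact this
    have b2 : Real.exp (x + y) ≤ (Real.exp (2 * x) + Real.exp (2 * y)) / 2 := by
      have e1 : Real.exp (2 * x) = Real.exp x ^ 2 := by rw [← Real.exp_nat_mul]; norm_num
      have e2 : Real.exp (2 * y) = Real.exp y ^ 2 := by rw [← Real.exp_nat_mul]; norm_num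
      rw [Real.exp_add, e1, e2]
      nlinarith [sq_nonneg (Real.exp x - Real.exp y)]
    nlinarith
  refine (Finset.sum_le_sum fun σ _ => hpt σ).trans ?_
  rw [Finset.sum_add_distrib, ← Finset.mul_sum, ← Finset.sum_div, Finset.sum_add_distrib]
  simp only [Finset.sum_const, Finset.card_univ, Fintype.card_perm, Fintype.card_fin, nsmul_eq_mul,
    mul_one]
  nlinarith

/-- The truncation event: in the intersection graph of `A` and of `B` pulled back along `π`, every
vertex set of size `k ≥ m` spans at most `ζ k` edges. -/
def Good {n : ℕ} (ζ : ℕ → ℝ) (m : ℕ) (π : Equiv.Perm (Fin n)) (ω : Obs n) : Prop :=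
  ∀ S : Finset (Fin n), m ≤ S.card →
    (((edgesIn S).filter fun e => (ω.1 e && ω.2 (edgeMap π e)) = true).card : ℝ) ≤ ζ S.card

open Classical in
/-- The likelihood ratio of the planted model truncated to the event `Good`. -/
def Ltr {n : ℕ} (p s : ℝ) (ζ : ℕ → ℝ) (m : ℕ) (ω : Obs n) : ℝ :=
  (n.factorial : ℝ)⁻¹ * ∑ π, if Good ζ m π ω then LR p s π ω else 0

theorem nullW_nonneg {n : ℕ} {q : ℝ} (h0 : 0 ≤ q) (h1 : q ≤ 1) (ω : Obs n) : 0 ≤ nullW n q ω :=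
  Finset.prod_nonneg fun _ _ => mul_nonneg (bw_nonneg h0 h1 _) (bw_nonneg h0 h1 _)

theorem LR_nonneg {n : ℕ} {p s : ℝ} (hp : p ∈ Set.Ioo (0 : ℝ) 1) (hs : s ∈ Set.Icc (0 : ℝ) 1)
    (π : Equiv.Perm (Fin n)) (ω : Obs n) : 0 ≤ LR p s π ω :=
  Finset.prod_nonneg fun _ _ => lr_nonneg hp hs _ _

/-- Pulling the second graph of a pair back along `π`. -/
def pullB {n : ℕ} (π : Equiv.Perm (Fin n)) : Obs n ≃ Obs n :=
  (Equiv.refl _).prodCongr ((edgeEquiv π).symm.arrowCongr (Equiv.refl Bool))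

theorem pullB_apply {n : ℕ} (π : Equiv.Perm (Fin n)) (ω : Obs n) :
    pullB π ω = (ω.1, fun e => ω.2 (edgeMap π e)) := rfl

theorem nullW_pullB {n : ℕ} (q : ℝ) (π : Equiv.Perm (Fin n)) (ω : Obs n) :
    nullW n q (pullB π ω) = nullW n q ω := by
  rw [pullB_apply, nullW, nullW, Finset.prod_mul_distrib, Finset.prod_mul_distrib]
  congr 1
  exact Equiv.prod_comp (edgeEquiv π) (fun e => bw q (ω.2 e))

theorem sum_pullB {n : ℕ} (q : ℝ) (π : Equiv.Perm (Fin n)) (f : Obs n → ℝ) :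
    ∑ ω, nullW n q ω * f (pullB π ω) = ∑ ω, nullW n q ω * f ω := by
  rw [← Equiv.sum_comp (pullB π) fun ω => nullW n q ω * f ω]
  simp only [nullW_pullB]

theorem prod_ite_pow {ι : Type*} (K : Finset ι) (P : ι → Prop) [DecidablePred P] (y : ℝ) :
    ∏ e ∈ K, (if P e then y else 1) = y ^ (K.filter P).card := by
  rw [← Finset.prod_filter, Finset.prod_const]

/-- Exponential moments of the number of common edges in `K` under the planted model. -/
theorem chern_sum {n : ℕ} {p s : ℝ} (hp : p ∈ Set.Ioo (0 : ℝ) 1) (hs : s ∈ Set.Icc (0 : ℝ) 1)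
    (π : Equiv.Perm (Fin n)) (K : Finset (Edge n)) (y : ℝ) :
    ∑ ω, nullW n (p * s) ω * (LR p s π ω *
      y ^ (K.filter fun e => (ω.1 e && ω.2 (edgeMap π e)) = true).card) =
    (1 + p * s ^ 2 * (y - 1)) ^ K.card := by
  classical
  have := sum_pullB (p * s) π (fun ω => (∏ e, lr p s (ω.1 e) (ω.2 e)) *
      y ^ (K.filter fun e => (ω.1 e && ω.2 e) = true).card)
  simp only [pullB_apply] at this
  rw [show (∑ ω, nullW n (p * s) ω * (LR p s π ω *
      y ^ (K.filter fun e => (ω.1 e && ω.2 (edgeMap π e)) = true).card)) = _ from this]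
  simp only [← prod_ite_pow]
  have h1 : ∀ ω : Obs n, nullW n (p * s) ω * ((∏ e, lr p s (ω.1 e) (ω.2 e)) *
      ∏ e ∈ K, (if (ω.1 e && ω.2 e) = true then y else 1)) =
      ∏ e, bw (p * s) (ω.1 e) * bw (p * s) (ω.2 e) * lr p s (ω.1 e) (ω.2 e) *
        (if (ω.1 e && ω.2 e) = true then (if e ∈ K then y else 1) else 1) := by
    intro ω
    rw [nullW]
    simp only [Finset.prod_mul_distrib]
    have : ∏ e, (if (ω.1 e && ω.2 e) = true then (if e ∈ K then y else 1) else 1) =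
        ∏ e ∈ K, (if (ω.1 e && ω.2 e) = true then y else 1) := by
      rw [← Finset.univ_inter K, ← Finset.prod_ite_mem]
      refine Finset.prod_congr rfl fun e _ => ?_
      simp only [Finset.mem_inter, Finset.mem_univ, true_and]
      split_ifs <;> rfl
    rw [this]; ring
  simp only [h1]
  rw [Fintype.sum_prod_type]
  simp only
  have h2 : ∀ f : Edge n → Bool → Bool → ℝ,
      ∑ a : Edge n → Bool, ∑ b : Edge n → Bool, ∏ e, f e (a e) (b e) = ∏ e, ∑ a, ∑ b, f e a b := by
    intro f
    simp only [Fintype.prod_sum]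
  rw [h2 fun e a b => bw (p * s) a * bw (p * s) b * lr p s a b *
        (if (a && b) = true then (if e ∈ K then y else 1) else 1)]
  simp only [chern_edge hp hs]
  rw [← Finset.prod_const, ← Finset.univ_inter K, ← Finset.prod_ite_mem]
  refine Finset.prod_congr rfl fun e _ => ?_
  simp only [Finset.mem_inter, Finset.mem_univ, true_and]
  split_ifs <;> simp

theorem LR_mass {n : ℕ} {p s : ℝ} (hp : p ∈ Set.Ioo (0 : ℝ) 1) (hs : s ∈ Set.Icc (0 : ℝ) 1)
    (π : Equiv.Perm (Fin n)) : ∑ ω, nullW n (p * s) ω * LR p s π ω = 1 := by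
  simpa using chern_sum hp hs π ∅ 1

theorem nullW_mass {n : ℕ} (q : ℝ) : ∑ ω, nullW n q ω = 1 := by
  have h2 : ∀ f : Edge n → Bool → Bool → ℝ,
      ∑ a : Edge n → Bool, ∑ b : Edge n → Bool, ∏ e, f e (a e) (b e) = ∏ e, ∑ a, ∑ b, f e a b := by
    intro f
    simp only [Fintype.prod_sum]
  rw [Fintype.sum_prod_type]
  simp only [nullW]
  rw [h2 fun e a b => bw q a * bw q b]
  simp only [← Finset.mul_sum, sum_bw, mul_one, Finset.prod_const_one]

/-- The bound on the truncated second moment contributed by pairs of permutations differing by `σ`.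
From `m` fixed points on it uses the truncation level `ζ`, below that it is the untruncated bound. -/
def Hb {n : ℕ} (p s : ℝ) (ζ : ℕ → ℝ) (m : ℕ) (σ : Equiv.Perm (Fin n)) : ℝ :=
  (if m ≤ (fixF σ).card then
    Real.exp (Real.log (1 / p) * ζ (fixF σ).card) *
      (1 + rho2 p s + s ^ 2 * (p - 1)) ^ ((fixF σ).card.choose 2)
    else (1 + rho2 p s) ^ ((fixF σ).card.choose 2)) *
  Real.exp ((rho2 p s + 2 * n * rho2 p s ^ 2) * (twoF σ).card +
    (n * rho2 p s ^ 2 + n ^ 2 * rho2 p s ^ 3))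

section
variable {n : ℕ} {p s : ℝ}

theorem rho2_le (hp : p ∈ Set.Ioo (0 : ℝ) 1) (hs : s ∈ Set.Icc (0 : ℝ) 1) :
    0 ≤ rho2 p s ∧ rho2 p s ≤ s ^ 2 ∧ rho2 p s ≤ 1 := by
  have h := ps_lt hp hs
  have h1 : 0 < 1 - p * s := by linarith
  have h2 : 0 ≤ s := hs.1
  have h3 : 0 ≤ s * (1 - p) / (1 - p * s) := by
    have : 0 ≤ 1 - p := by linarith [hp.2]
    positivity
  have h4 : s * (1 - p) / (1 - p * s) ≤ s := by
    rw [div_le_iff₀ h1]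
    have : 0 ≤ p * (s * (1 - s)) := mul_nonneg hp.1.le (mul_nonneg h2 (by linarith [hs.2]))
    nlinarith
  unfold rho2
  have h5 : (s * (1 - p) / (1 - p * s)) ^ 2 ≤ s ^ 2 := by gcongr
  refine ⟨by positivity, h5, h5.trans ?_⟩
  have := hs.2
  nlinarith

/-- The pair second moment with the tilt `y` on the common edges between fixed points of `σ`. -/
theorem tilt_bound (hp : p ∈ Set.Ioo (0 : ℝ) 1) (hs : s ∈ Set.Icc (0 : ℝ) 1)
    (σ : Equiv.Perm (Fin n)) (y : ℝ) (hy : 0 ≤ 1 + rho2 p s + s ^ 2 * (y - 1)) :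
    ∑ ω : Obs n, nullW n (p * s) ω * ((∏ e, lr p s (ω.1 e) (ω.2 e)) *
      (∏ e, lr p s (ω.1 e) (ω.2 (edgeMap σ e))) *
        y ^ ((edgesIn (fixF σ)).filter fun e => (ω.1 e && ω.2 e) = true).card) ≤
    (1 + rho2 p s + s ^ 2 * (y - 1)) ^ ((fixF σ).card.choose 2) *
      Real.exp ((rho2 p s + 2 * n * rho2 p s ^ 2) * (twoF σ).card +
        (n * rho2 p s ^ 2 + n ^ 2 * rho2 p s ^ 3)) := by
  classical
  have h := pair_sum hp hs (edgeEquiv σ) (edgesIn (fixF σ)) (edgesIn_fix σ) y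
  simp only [prod_ite_pow] at h
  rw [Fintype.sum_prod_type]
  have hr := rho2_le hp hs
  calc _ = _ := h
    _ ≤ _ := by
      rw [card_edgesIn]
      refine mul_le_mul_of_nonneg_left ?_ (pow_nonneg hy _)
      refine (inv_sum_le _ _ hr.1 hr.2.2).trans (Real.exp_le_exp.2 (orb_sum_le σ hr.1))

open Classical in
/-- If `σ = π⁻¹ τ` has `k ≥ m` fixed points, the number `N` of common edges between them is at most
`ζ k` on the event `Good`, hence `1 ≤ exp (log (1/p) ζ k) p ^ N` and `tilt_bound` applies with
`y = p`. With fewer fixed points it applies with `y = 1`. -/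
theorem pair_bound (hp : p ∈ Set.Ioo (0 : ℝ) 1) (hs : s ∈ Set.Icc (0 : ℝ) 1)
    (ζ : ℕ → ℝ) (m : ℕ) (π τ : Equiv.Perm (Fin n)) :
    ∑ ω, nullW n (p * s) ω * ((if Good ζ m π ω then LR p s π ω else 0) *
      (if Good ζ m τ ω then LR p s τ ω else 0)) ≤ Hb p s ζ m (π⁻¹ * τ) := by
  have hq := ps_lt hp hs
  have hr := rho2_le hp hs
  set σ := π⁻¹ * τ with hσ
  have hτ : ∀ e, edgeMap τ e = edgeMap π (edgeMap σ e) := by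
    intro e; rw [← edgeMap_mul, hσ, mul_inv_cancel_left]
  have hLτ : ∀ ω, LR p s τ ω = ∏ e, lr p s ((pullB π ω).1 e) ((pullB π ω).2 (edgeMap σ e)) := by
    intro ω; simp only [LR, hτ, pullB_apply]
  have hLπ : ∀ ω, LR p s π ω = ∏ e, lr p s ((pullB π ω).1 e) ((pullB π ω).2 e) := fun ω => rfl
  unfold Hb
  split_ifs with hm
  · have hy : 0 ≤ 1 + rho2 p s + s ^ 2 * (p - 1) := by
      have := hs.1; have := hs.2; have := hp.1
      nlinarith [mul_nonneg (sq_nonneg s) hp.1.le]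
    rw [mul_assoc]
    refine le_trans ?_ (mul_le_mul_of_nonneg_left (tilt_bound hp hs σ p hy) (Real.exp_pos _).le)
    rw [← sum_pullB (p * s) π (fun ω => (∏ e, lr p s (ω.1 e) (ω.2 e)) *
      (∏ e, lr p s (ω.1 e) (ω.2 (edgeMap σ e))) *
        p ^ ((edgesIn (fixF σ)).filter fun e => (ω.1 e && ω.2 e) = true).card), Finset.mul_sum]
    refine Finset.sum_le_sum fun ω _ => ?_
    rw [← hLτ, ← hLπ, mul_left_comm (Real.exp _)]
    refine mul_le_mul_of_nonneg_left ?_ (nullW_nonneg hq.1 hq.2.1.le ω)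
    have a1 := LR_nonneg hp hs π ω
    have a2 := LR_nonneg hp hs τ ω
    have hp0 := hp.1
    by_cases hg : Good ζ m π ω
    · have hN := hg (fixF σ) hm
      simp only [pullB_apply]
      set N := ((edgesIn (fixF σ)).filter fun e => (ω.1 e && ω.2 (edgeMap π e)) = true).card
      have hlog : 0 ≤ Real.log (1 / p) := Real.log_nonneg (by rw [le_div_iff₀ hp0]; linarith [hp.2])
      have hpow : 1 ≤ Real.exp (Real.log (1 / p) * ζ (fixF σ).card) * p ^ N := by
        have : p ^ N = Real.exp (- (Real.log (1 / p) * N)) := by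
          rw [one_div, Real.log_inv, neg_mul, neg_neg, mul_comm, Real.exp_nat_mul, Real.exp_log hp0]
        rw [this, ← Real.exp_add]
        exact Real.one_le_exp (by nlinarith)
      rw [if_pos hg]
      have b : (if Good ζ m τ ω then LR p s τ ω else 0) ≤ LR p s τ ω := by split_ifs <;> simp [a2]
      calc LR p s π ω * (if Good ζ m τ ω then LR p s τ ω else 0) ≤ LR p s π ω * LR p s τ ω :=
            mul_le_mul_of_nonneg_left b a1
        _ ≤ (LR p s π ω * LR p s τ ω) * (Real.exp (Real.log (1 / p) * ζ (fixF σ).card) * p ^ N) :=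
            le_mul_of_one_le_right (by positivity) hpow
        _ = Real.exp (Real.log (1 / p) * ζ (fixF σ).card) *
            (LR p s π ω * LR p s τ ω * p ^ N) := by ring
        _ ≤ _ := by
          apply le_of_eq
          congr!
    · rw [if_neg hg, zero_mul]
      positivity
  · have hy : 0 ≤ 1 + rho2 p s + s ^ 2 * ((1 : ℝ) - 1) := by
      rw [sub_self, mul_zero, add_zero]; linarith
    have hb := tilt_bound hp hs σ 1 hy
    rw [sub_self, mul_zero, add_zero] at hb
    refine le_trans ?_ hb
    rw [← sum_pullB (p * s) π (fun ω => (∏ e, lr p s (ω.1 e) (ω.2 e)) *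
      (∏ e, lr p s (ω.1 e) (ω.2 (edgeMap σ e))) *
        (1 : ℝ) ^ ((edgesIn (fixF σ)).filter fun e => (ω.1 e && ω.2 e) = true).card)]
    refine Finset.sum_le_sum fun ω _ => ?_
    rw [← hLτ, ← hLπ, one_pow, mul_one]
    refine mul_le_mul_of_nonneg_left ?_ (nullW_nonneg hq.1 hq.2.1.le ω)
    have a1 := LR_nonneg hp hs π ω
    have a2 := LR_nonneg hp hs τ ω
    split_ifs <;> simp <;> positivity

theorem second_moment (hp : p ∈ Set.Ioo (0 : ℝ) 1) (hs : s ∈ Set.Icc (0 : ℝ) 1)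
    (ζ : ℕ → ℝ) (m : ℕ) :
    ∑ ω, nullW n (p * s) ω * Ltr p s ζ m ω ^ 2 ≤
      (n.factorial : ℝ)⁻¹ * ∑ σ : Equiv.Perm (Fin n), Hb p s ζ m σ := by
  classical
  have hn : (0 : ℝ) < n.factorial := by exact_mod_cast n.factorial_pos
  have h1 : ∀ ω : Obs n, nullW n (p * s) ω * Ltr p s ζ m ω ^ 2 =
      (n.factorial : ℝ)⁻¹ ^ 2 * ∑ π : Equiv.Perm (Fin n), ∑ τ : Equiv.Perm (Fin n),
        nullW n (p * s) ω * ((if Good ζ m π ω then LR p s π ω else 0) *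
      (if Good ζ m τ ω then LR p s τ ω else 0)) := by
    intro ω
    rw [Ltr, mul_pow, sq (∑ π, _), Finset.sum_mul_sum, mul_left_comm, Finset.mul_sum]
    simp only [Finset.mul_sum]
  simp only [h1]
  rw [← Finset.mul_sum, Finset.sum_comm]
  have h2 : ∀ π : Equiv.Perm (Fin n), ∑ ω, ∑ τ : Equiv.Perm (Fin n),
        nullW n (p * s) ω * ((if Good ζ m π ω then LR p s π ω else 0) *
      (if Good ζ m τ ω then LR p s τ ω else 0)) ≤ ∑ σ : Equiv.Perm (Fin n), Hb p s ζ m σ := by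
    intro π
    rw [Finset.sum_comm, ← Equiv.sum_comp (Equiv.mulLeft π⁻¹) (fun σ => Hb p s ζ m σ)]
    exact Finset.sum_le_sum fun τ _ => pair_bound hp hs ζ m π τ
  refine (mul_le_mul_of_nonneg_left (Finset.sum_le_sum fun π _ => h2 π) (by positivity)).trans ?_
  rw [Finset.sum_const, Finset.card_univ, Fintype.card_perm, Fintype.card_fin, nsmul_eq_mul]
  apply le_of_eq
  field_simp

end

/-! ### Truncation error and total variation -/

theorem geom_tail (m N : ℕ) :
    ∑ k ∈ Finset.range N, (if m ≤ k then Real.exp (-(k : ℝ)) else 0) ≤ 2 * Real.exp (-(m : ℝ)) := by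
  have h1 : ∑ k ∈ Finset.range N, (if m ≤ k then Real.exp (-(k : ℝ)) else 0) =
      ∑ k ∈ Finset.Ico m N, Real.exp (-(k : ℝ)) := by
    rw [← Finset.sum_filter]
    congr 1
    ext k; simp only [Finset.mem_filter, Finset.mem_range, Finset.mem_Ico]; tauto
  rw [h1, Finset.sum_Ico_eq_sum_range]
  have h2 : ∀ i : ℕ, Real.exp (-((m + i : ℕ) : ℝ)) ≤ Real.exp (-(m : ℝ)) * (1 / 2) ^ i := by
    intro i
    have : Real.exp (-1) ≤ 1 / 2 := by
      rw [Real.exp_neg, one_div]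
      exact inv_anti₀ (by norm_num) (by linarith [Real.add_one_le_exp (1 : ℝ)])
    have e : Real.exp (-((m + i : ℕ) : ℝ)) = Real.exp (-(m : ℝ)) * Real.exp (-1) ^ i := by
      rw [← Real.exp_nat_mul, ← Real.exp_add]; push_cast; ring_nf
    rw [e]
    gcongr
  refine (Finset.sum_le_sum fun i _ => h2 i).trans ?_
  rw [← Finset.mul_sum, mul_comm]
  exact mul_le_mul_of_nonneg_right (sum_geometric_two_le _) (Real.exp_pos _).le

/-- The entropy term in the truncation level pays for the union bound over `k`-subsets. -/
theorem choose_entropy {n k : ℕ} (hk : 1 ≤ k) (hkn : k ≤ n) :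
    (n.choose k : ℝ) * Real.exp (-(k * (2 + Real.log (n / k)))) ≤ Real.exp (-(k : ℝ)) := by
  have hk0 : (0 : ℝ) < k := by exact_mod_cast hk
  have hn0 : (0 : ℝ) < n := by exact_mod_cast hk.trans hkn
  have h1 : (n.choose k : ℝ) ≤ (n : ℝ) ^ k / k.factorial := Nat.choose_le_pow_div k n
  have h2 : (k : ℝ) ^ k / k.factorial ≤ Real.exp k := Real.pow_div_factorial_le_exp k hk0.le k
  have h3 : Real.exp (-(k * (2 + Real.log (n / k)))) =
      Real.exp (-(k : ℝ)) * Real.exp (-(k : ℝ)) * ((k : ℝ) ^ k / (n : ℝ) ^ k) := by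
    have : (k : ℝ) ^ k / (n : ℝ) ^ k = Real.exp (-(k * Real.log (n / k))) := by
      rw [← div_pow, ← mul_neg, Real.exp_nat_mul, ← Real.log_inv, inv_div, Real.exp_log (by positivity)]
    rw [this, ← Real.exp_add, ← Real.exp_add]; ring_nf
  have hf : (0 : ℝ) < k.factorial := by exact_mod_cast k.factorial_pos
  rw [h3]
  calc _ ≤ (n : ℝ) ^ k / k.factorial *
        (Real.exp (-(k : ℝ)) * Real.exp (-(k : ℝ)) * ((k : ℝ) ^ k / (n : ℝ) ^ k)) := by gcongr
    _ = (Real.exp (-(k : ℝ)) * Real.exp (-(k : ℝ))) * ((k : ℝ) ^ k / k.factorial) := by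
        field_simp
    _ ≤ (Real.exp (-(k : ℝ)) * Real.exp (-(k : ℝ))) * Real.exp k := by gcongr
    _ = _ := by rw [mul_assoc, ← Real.exp_add]; simp

section
variable {n : ℕ} {p s : ℝ}

open Classical in
/-- Under the planted model the truncation event fails with exponentially small probability: a
Chernoff bound with parameter `t k` for each vertex set of size `k`, and a union bound. -/
theorem bad_bound (hp : p ∈ Set.Ioo (0 : ℝ) 1) (hs : s ∈ Set.Icc (0 : ℝ) 1)
    (ζ t : ℕ → ℝ) (m : ℕ) (hm : 1 ≤ m)
    (ht : ∀ k, m ≤ k → k ≤ n → 0 ≤ t k)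
    (hζ : ∀ k, m ≤ k → k ≤ n → (k.choose 2 : ℝ) * (p * s ^ 2 * (Real.exp (t k) - 1)) +
      k * (2 + Real.log (n / k)) ≤ t k * ζ k) (π : Equiv.Perm (Fin n)) :
    ∑ ω, nullW n (p * s) ω * (if Good ζ m π ω then 0 else LR p s π ω) ≤
      2 * Real.exp (-(m : ℝ)) := by
  have hq := ps_lt hp hs
  set cnt : Finset (Fin n) → Obs n → ℕ := fun S ω =>
    ((edgesIn S).filter fun e => (ω.1 e && ω.2 (edgeMap π e)) = true).card with hcnt
  have hpt : ∀ ω : Obs n, (if Good ζ m π ω then 0 else LR p s π ω) ≤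
      ∑ S ∈ (Finset.univ : Finset (Fin n)).powerset, if m ≤ S.card then
        Real.exp (-(t S.card * ζ S.card)) * (LR p s π ω * Real.exp (t S.card) ^ cnt S ω) else 0 := by
    intro ω
    have a1 := LR_nonneg hp hs π ω
    have hnn : ∀ S ∈ (Finset.univ : Finset (Fin n)).powerset, 0 ≤ if m ≤ S.card then
        Real.exp (-(t S.card * ζ S.card)) * (LR p s π ω * Real.exp (t S.card) ^ cnt S ω) else 0 := by
      intro S _
      split_ifs
      · positivity
      · exact le_rfl
    split_ifs with hg
    · exact Finset.sum_nonneg hnn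
    · unfold Good at hg
      push Not at hg
      obtain ⟨S, hS, hlt⟩ := hg
      have hlt' : ζ S.card < cnt S ω := by convert hlt
      have hcard : S.card ≤ n := by simpa using Finset.card_le_univ S
      refine le_trans ?_ (Finset.single_le_sum hnn (Finset.mem_powerset.2 (Finset.subset_univ S)))
      rw [if_pos hS, ← Real.exp_nat_mul, mul_left_comm, ← Real.exp_add]
      refine le_mul_of_one_le_right a1 (Real.one_le_exp ?_)
      nlinarith [ht S.card hS hcard]
  calc _ ≤ ∑ ω, nullW n (p * s) ω * ∑ S ∈ (Finset.univ : Finset (Fin n)).powerset, (if m ≤ S.card then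
        Real.exp (-(t S.card * ζ S.card)) * (LR p s π ω * Real.exp (t S.card) ^ cnt S ω) else 0) :=
        Finset.sum_le_sum fun ω _ =>
          mul_le_mul_of_nonneg_left (hpt ω) (nullW_nonneg hq.1 hq.2.1.le ω)
    _ = ∑ S ∈ (Finset.univ : Finset (Fin n)).powerset, (if m ≤ S.card then
        Real.exp (-(t S.card * ζ S.card)) *
          (1 + p * s ^ 2 * (Real.exp (t S.card) - 1)) ^ (S.card.choose 2) else 0) := by
        simp only [Finset.mul_sum]
        rw [Finset.sum_comm]
        refine Finset.sum_congr rfl fun S _ => ?_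
        split_ifs
        · rw [← card_edgesIn, ← chern_sum hp hs π, Finset.mul_sum]
          refine Finset.sum_congr rfl fun ω _ => ?_
          rw [mul_left_comm]
        · simp
    _ ≤ ∑ S ∈ (Finset.univ : Finset (Fin n)).powerset, (if m ≤ S.card then
        Real.exp (-(S.card * (2 + Real.log (n / S.card)))) else 0) := by
        refine Finset.sum_le_sum fun S _ => ?_
        split_ifs with hS
        · have hcard : S.card ≤ n := by simpa using Finset.card_le_univ S
          have h0 : 0 ≤ p * s ^ 2 * (Real.exp (t S.card) - 1) :=
            mul_nonneg (mul_nonneg hp.1.le (sq_nonneg s))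
              (by linarith [Real.one_le_exp (ht S.card hS hcard)])
          have h1 : (1 + p * s ^ 2 * (Real.exp (t S.card) - 1)) ^ (S.card.choose 2) ≤
              Real.exp (S.card.choose 2 * (p * s ^ 2 * (Real.exp (t S.card) - 1))) := by
            rw [Real.exp_nat_mul]
            gcongr
            linarith [Real.add_one_le_exp (p * s ^ 2 * (Real.exp (t S.card) - 1))]
          refine (mul_le_mul_of_nonneg_left h1 (Real.exp_pos _).le).trans ?_
          rw [← Real.exp_add]
          exact Real.exp_le_exp.2 (by linarith [hζ S.card hS hcard])
        · exact le_rfl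
    _ = ∑ k ∈ Finset.range (n + 1), (n.choose k : ℝ) *
          (if m ≤ k then Real.exp (-(k * (2 + Real.log (n / k)))) else 0) := by
        have := Finset.sum_powerset_apply_card
          (fun k : ℕ => if m ≤ k then Real.exp (-((k : ℝ) * (2 + Real.log (n / k)))) else 0)
          (x := (Finset.univ : Finset (Fin n)))
        simpa [nsmul_eq_mul] using this
    _ ≤ ∑ k ∈ Finset.range (n + 1), (if m ≤ k then Real.exp (-(k : ℝ)) else 0) := by
        refine Finset.sum_le_sum fun k hk => ?_
        split_ifs with hmk
        · exact choose_entropy (hm.trans hmk) (Nat.lt_succ_iff.1 (Finset.mem_range.1 hk))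
        · simp
    _ ≤ _ := geom_tail m (n + 1)

open Classical in
/-- Total variation is controlled by the truncated second moment and the mass lost by truncation:
the truncated likelihood ratio has mean at least `1 - b`, hence `L²` distance from `1` at most
`sqrt (M - 1 + 2 b)`. -/
theorem TV_le (hp : p ∈ Set.Ioo (0 : ℝ) 1) (hs : s ∈ Set.Icc (0 : ℝ) 1)
    (ζ : ℕ → ℝ) (m : ℕ) (b M : ℝ)
    (hb : ∀ π : Equiv.Perm (Fin n),
      ∑ ω, nullW n (p * s) ω * (if Good ζ m π ω then 0 else LR p s π ω) ≤ b)
    (hM : ∑ ω : Obs n, nullW n (p * s) ω * Ltr p s ζ m ω ^ 2 ≤ M) :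
    TV (PER n p s) (QER n p s) ≤ b + Real.sqrt (M - 1 + 2 * b) := by
  have hq := ps_lt hp hs
  have hW := fun ω : Obs n => nullW_nonneg hq.1 hq.2.1.le ω
  have hn : (0 : ℝ) < n.factorial := by exact_mod_cast n.factorial_pos
  set W : Obs n → ℝ := nullW n (p * s) with hWdef
  set L : Obs n → ℝ := fun ω => (n.factorial : ℝ)⁻¹ * ∑ π : Equiv.Perm (Fin n), LR p s π ω with hL
  set T : Obs n → ℝ := fun ω => Ltr p s ζ m ω with hT
  have hcardP : ∀ c : ℝ, (n.factorial : ℝ)⁻¹ * ∑ _π : Equiv.Perm (Fin n), c = c := by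
    intro c
    rw [Finset.sum_const, Finset.card_univ, Fintype.card_perm, Fintype.card_fin, nsmul_eq_mul]
    field_simp
  have hW1 : ∑ ω, W ω = 1 := nullW_mass _
  have swap : ∀ f : Equiv.Perm (Fin n) → Obs n → ℝ,
      ∑ ω, W ω * ((n.factorial : ℝ)⁻¹ * ∑ π : Equiv.Perm (Fin n), f π ω) =
      (n.factorial : ℝ)⁻¹ * ∑ π : Equiv.Perm (Fin n), ∑ ω, W ω * f π ω := by
    intro f
    rw [Finset.sum_comm, Finset.mul_sum]
    refine Finset.sum_congr rfl fun ω _ => ?_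
    rw [mul_left_comm, Finset.mul_sum]
  have hL1 : ∑ ω, W ω * L ω = 1 := by
    simp only [hL]
    rw [swap fun π ω => LR p s π ω]
    simp only [hWdef, LR_mass hp hs]
    exact hcardP 1
  have hLT : ∀ ω, L ω - T ω = (n.factorial : ℝ)⁻¹ * ∑ π : Equiv.Perm (Fin n),
      (if Good ζ m π ω then 0 else LR p s π ω) := by
    intro ω
    simp only [hL, hT, Ltr]
    rw [← mul_sub, ← Finset.sum_sub_distrib]
    congr 1
    refine Finset.sum_congr rfl fun π _ => ?_
    split_ifs <;> simp
  have hLT0 : ∀ ω, 0 ≤ L ω - T ω := by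
    intro ω
    rw [hLT]
    refine mul_nonneg (by positivity) (Finset.sum_nonneg fun π _ => ?_)
    split_ifs
    · exact le_rfl
    · exact LR_nonneg hp hs π ω
  have hB : ∑ ω, W ω * (L ω - T ω) ≤ b := by
    simp only [hLT]
    rw [swap fun π ω => if Good ζ m π ω then 0 else LR p s π ω]
    calc _ ≤ (n.factorial : ℝ)⁻¹ * ∑ _π : Equiv.Perm (Fin n), b := by
          refine mul_le_mul_of_nonneg_left (Finset.sum_le_sum fun π _ => hb π) (by positivity)
      _ = b := hcardP b
  have hT1 : 1 - b ≤ ∑ ω, W ω * T ω := by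
    have : ∑ ω, W ω * (L ω - T ω) = ∑ ω, W ω * L ω - ∑ ω, W ω * T ω := by
      rw [← Finset.sum_sub_distrib]
      exact Finset.sum_congr rfl fun ω _ => by ring
    linarith
  have hCS : ∑ ω, W ω * |T ω - 1| ≤ Real.sqrt (M - 1 + 2 * b) := by
    apply Real.le_sqrt_of_sq_le
    have h1 : (∑ ω, W ω * |T ω - 1|) ^ 2 ≤ (∑ ω, W ω) * ∑ ω, W ω * |T ω - 1| ^ 2 := by
      refine Finset.sum_sq_le_sum_mul_sum_of_sq_le_mul Finset.univ (fun ω _ => hW ω)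
        (fun ω _ => mul_nonneg (hW ω) (sq_nonneg _)) (fun ω _ => le_of_eq (by ring))
    have h2 : ∑ ω, W ω * |T ω - 1| ^ 2 =
        ∑ ω, W ω * T ω ^ 2 - 2 * ∑ ω, W ω * T ω + ∑ ω, W ω := by
      rw [Finset.mul_sum, ← Finset.sum_sub_distrib, ← Finset.sum_add_distrib]
      refine Finset.sum_congr rfl fun ω _ => ?_
      rw [sq_abs]; ring
    rw [h2, hW1, one_mul] at h1
    linarith
  have key : ∑ ω, W ω * |L ω - 1| ≤ b + Real.sqrt (M - 1 + 2 * b) := by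
    refine le_trans ?_ (add_le_add hB hCS)
    rw [← Finset.sum_add_distrib]
    refine Finset.sum_le_sum fun ω _ => ?_
    rw [← mul_add]
    refine mul_le_mul_of_nonneg_left ?_ (hW ω)
    have : L ω - 1 = (L ω - T ω) + (T ω - 1) := by ring
    rw [this]
    exact (abs_add_le _ _).trans (by rw [abs_of_nonneg (hLT0 ω)])
  have : Nonempty {S : Set (Obs n) // MeasurableSet S} := ⟨⟨∅, MeasurableSet.empty⟩⟩
  unfold TV
  refine ciSup_le fun S => ?_
  rw [P_real n hp hs, Q_real n hp hs, ← Finset.sum_sub_distrib]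
  refine le_trans (Finset.abs_sum_le_sum_abs _ _) (le_trans (Finset.sum_le_sum fun ω _ => ?_) key)
  by_cases hω : ω ∈ S.1
  · rw [if_pos hω, if_pos hω, ← abs_of_nonneg (hW ω), ← abs_mul]
    apply le_of_eq
    congr 1
    simp only [hL, hWdef]
    ring
  · rw [if_neg hω, if_neg hω, sub_zero, abs_zero]
    exact mul_nonneg (hW ω) (abs_nonneg _)

end

theorem TV_nonneg {Ω : Type*} [MeasurableSpace Ω] (P Q : Measure Ω) : 0 ≤ TV P Q :=
  Real.iSup_nonneg fun _ => abs_nonneg _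

/-! ### Estimates for many fixed points -/

/-- Chernoff parameter used for vertex sets of size `k`. It is of order `t₀` for `k` of order `n`, and
the logarithm lets it grow in proportion to the entropy of the choice of a smaller set. -/
def tk (t₀ : ℝ) (n k : ℕ) : ℝ := t₀ * (1 + Real.log (n / k))

/-- Truncation level for the number of common edges spanned by `k` vertices: the smallest one that
`bad_bound` allows with the Chernoff parameter `tk`. -/
def zetaF (p s t₀ : ℝ) (n k : ℕ) : ℝ :=
  ((k.choose 2 : ℝ) * (p * s ^ 2 * (Real.exp (tk t₀ n k) - 1)) + k * (2 + Real.log (n / k))) /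
    tk t₀ n k

theorem log_ratio_nonneg {n k : ℕ} (hk : 1 ≤ k) (hkn : k ≤ n) : 0 ≤ Real.log ((n : ℝ) / k) := by
  apply Real.log_nonneg
  have : (0 : ℝ) < k := by exact_mod_cast hk
  rw [le_div_iff₀ this, one_mul]
  exact_mod_cast hkn

theorem tk_pos {t₀ : ℝ} (h0 : 0 < t₀) {n k : ℕ} (hk : 1 ≤ k) (hkn : k ≤ n) : 0 < tk t₀ n k := by
  have := log_ratio_nonneg hk hkn
  unfold tk; positivity

theorem exp_tilt {t x : ℝ} (ht : 0 ≤ t) (ht' : t ≤ 1 / 2) (hx : 0 ≤ x) :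
    Real.exp (-x) * Real.exp (t * x) ≤ Real.exp (-x) + t := by
  have h1 : Real.exp (t * x) - 1 ≤ t * x * Real.exp (t * x) := by
    have := Real.add_one_le_exp (-(t * x))
    have h2 : Real.exp (-(t * x)) * Real.exp (t * x) = 1 := by rw [← Real.exp_add]; simp
    nlinarith [Real.exp_pos (t * x)]
  have h3 : Real.exp (t * x) ≤ Real.exp (x / 2) := Real.exp_le_exp.2 (by nlinarith)
  have h4 : x ≤ Real.exp (x / 2) := by
    have := Real.quadratic_le_exp_of_nonneg (x := x / 2) (by linarith)
    nlinarith [sq_nonneg (x - 2)]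
  have h5 : Real.exp (-x) * (Real.exp (x / 2) * Real.exp (x / 2)) = 1 := by
    rw [← Real.exp_add, ← Real.exp_add, ← Real.exp_zero]; congr 1; ring
  have h6 : x * Real.exp (t * x) ≤ Real.exp (x / 2) * Real.exp (x / 2) :=
    mul_le_mul h4 h3 (Real.exp_pos _).le (Real.exp_pos _).le
  have h7 : Real.exp (-x) * (Real.exp (t * x) - 1) ≤ t := by
    calc Real.exp (-x) * (Real.exp (t * x) - 1) ≤ Real.exp (-x) * (t * x * Real.exp (t * x)) := by gcongr
      _ = t * (Real.exp (-x) * (x * Real.exp (t * x))) := by ring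
      _ ≤ t * (Real.exp (-x) * (Real.exp (x / 2) * Real.exp (x / 2))) := by gcongr
      _ = t := by rw [h5, mul_one]
  linarith

theorem exp_small {t : ℝ} (ht : 0 ≤ t) (ht' : t ≤ 1 / 2) : Real.exp t * (1 + t) ≤ 1 + 4 * t := by
  have h := Real.add_one_le_exp (-t)
  have h2 : Real.exp (-t) * Real.exp t = 1 := by rw [← Real.exp_add]; simp
  have h3 : Real.exp t ≤ 1 + 2 * t := by
    have : (1 - t) * Real.exp t ≤ 1 := by nlinarith [Real.exp_pos t]
    by_contra hc
    push Not at hc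
    nlinarith
  nlinarith

theorem zetaF_le {p s t₀ : ℝ} (hp : 0 ≤ p) (h0 : 0 < t₀) {n k : ℕ} (hk : 1 ≤ k) (hkn : k ≤ n) :
    zetaF p s t₀ n k ≤ (k.choose 2 : ℝ) * (p * s ^ 2 * Real.exp (tk t₀ n k)) + 2 / t₀ * k := by
  have ht := tk_pos h0 hk hkn
  have hx := log_ratio_nonneg hk hkn
  unfold zetaF
  rw [div_le_iff₀ ht]
  have h1 : Real.exp (tk t₀ n k) - 1 ≤ Real.exp (tk t₀ n k) * tk t₀ n k := by
    have := Real.add_one_le_exp (-(tk t₀ n k))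
    have h2 : Real.exp (-(tk t₀ n k)) * Real.exp (tk t₀ n k) = 1 := by rw [← Real.exp_add]; simp
    nlinarith [Real.exp_pos (tk t₀ n k)]
  have h2 : 2 / t₀ * k * tk t₀ n k = k * (2 + 2 * Real.log (n / k)) := by
    unfold tk; field_simp
  have h3 : (k.choose 2 : ℝ) * (p * s ^ 2 * (Real.exp (tk t₀ n k) - 1)) ≤
      (k.choose 2 : ℝ) * (p * s ^ 2 * (Real.exp (tk t₀ n k) * tk t₀ n k)) := by gcongr
  have hk0 : (0 : ℝ) ≤ k := Nat.cast_nonneg k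
  rw [add_mul, h2]
  nlinarith [mul_nonneg hk0 hx]

/-- To leading order in `s`, the tilt by `p` changes the excess `ρ²` into `-p (1 - p) s²`. -/
theorem rho2_tilt {p s : ℝ} (hp : p ∈ Set.Ioo (0 : ℝ) 1) (hs : s ∈ Set.Icc (0 : ℝ) 1)
    (hs6 : 6 * s ≤ 1) :
    rho2 p s + s ^ 2 * (p - 1) ≤ -(p * s ^ 2 * ((1 - p) * (1 - 6 * s))) := by
  obtain ⟨hp0, hp1⟩ := hp
  obtain ⟨hs0, hs1⟩ := hs
  have hz0 : 0 ≤ p * s := by positivity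
  have hz : p * s ≤ 1 / 2 := by nlinarith
  have h1 : 0 < 1 - p * s := by linarith
  have h2 : rho2 p s ≤ s ^ 2 * (1 - p) ^ 2 * (1 + 6 * (p * s)) := by
    unfold rho2
    rw [div_pow, div_le_iff₀ (by positivity), mul_pow, mul_assoc (s ^ 2 * (1 - p) ^ 2)]
    apply le_mul_of_one_le_right (by positivity)
    nlinarith [mul_nonneg hz0 (mul_nonneg (by linarith : 0 ≤ 1 / 2 - p * s)
      (by linarith : 0 ≤ 8 - 6 * (p * s)))]
  have h3 : s ^ 2 * (1 - p) ^ 2 * (1 + 6 * (p * s)) + s ^ 2 * (p - 1) ≤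
      -(p * s ^ 2 * ((1 - p) * (1 - 6 * s))) := by
    have : 0 ≤ p * s ^ 2 * (1 - p) * (6 * s * p) := by
      have : 0 ≤ 1 - p := by linarith
      positivity
    nlinarith
  linarith

set_option maxHeartbeats 1000000 in
/-- The contribution of `k` fixed points to the truncated second moment is at most
`n ^ ((1 - 3ε/8) k)`, up to a factor `n ^ o(k)`. This is beaten by the probability `1/k!` of having
`k` fixed points as soon as `k ≥ n ^ (1 - ε/16)`. -/
theorem large_k {n k : ℕ} {p s ε C t₀ : ℝ} (hk : 1 ≤ k) (hkn : k ≤ n)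
    (hp : p ∈ Set.Ioo (0 : ℝ) 1) (hs : s ∈ Set.Icc (0 : ℝ) 1) (hε : 0 < ε)
    (h0 : 0 < t₀) (h1 : t₀ ≤ 1 / 2)
    (hh : 0 < Real.log (1 / p) - 1 + p)
    (hlam : Real.log (1 / p) ≤ C * (Real.log (1 / p) - 1 + p))
    (htC : (4 * C + 1) * t₀ ≤ ε / 8) (hs6 : 6 * s ≤ 1)
    (hs6' : 6 * s ≤ t₀ * (Real.log (1 / p) - 1 + p))
    (hmain : n * p * s ^ 2 * (Real.log (1 / p) - 1 + p) ≤ (2 - ε) * Real.log n) :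
    Real.exp (Real.log (1 / p) * zetaF p s t₀ n k) *
      (1 + rho2 p s + s ^ 2 * (p - 1)) ^ (k.choose 2) ≤
    Real.exp (((1 - 3 * ε / 8) * Real.log n + 1 / 2 + 2 / t₀ * Real.log (1 / p)) * k) := by
  obtain ⟨hp0, hp1⟩ := hp
  obtain ⟨hs0, hs1⟩ := hs
  set lam := Real.log (1 / p) with hlamdef
  set h := lam - 1 + p with hhdef
  set x := Real.log ((n : ℝ) / k) with hxdef
  have hx : 0 ≤ x := log_ratio_nonneg hk hkn
  have hk0 : (0 : ℝ) < k := by exact_mod_cast hk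
  have hn0 : (0 : ℝ) < n := by exact_mod_cast hk.trans hkn
  have hy : Real.exp (-x) * n = k := by
    rw [hxdef, Real.exp_neg, Real.exp_log (by positivity)]; field_simp
  have hlam1 : 1 - p ≤ lam := by linarith
  have hlam0 : 0 ≤ lam := by linarith
  set a := (1 - p) * (1 - 6 * s) with ha
  have ha0 : 0 ≤ a := mul_nonneg (by linarith) (by linarith)
  have ha1 : a ≤ 1 - p := by nlinarith
  have ha2 : 1 - p - 6 * s ≤ a := by nlinarith
  set E := Real.exp (tk t₀ n k) with hE
  have hE0 : 0 < E := Real.exp_pos _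
  have hEeq : E = Real.exp t₀ * Real.exp (t₀ * x) := by
    rw [hE, tk, ← hxdef, ← Real.exp_add]; congr 1; ring
  -- the base of the power is at most `exp (-p s² a)`
  have hbase : (1 + rho2 p s + s ^ 2 * (p - 1)) ^ (k.choose 2) ≤
      Real.exp (-((k.choose 2 : ℝ) * (p * s ^ 2 * a))) := by
    rw [← mul_neg, Real.exp_nat_mul]
    have hb := rho2_tilt ⟨hp0, hp1⟩ ⟨hs0, hs1⟩ hs6
    have hb0 : 0 ≤ 1 + rho2 p s + s ^ 2 * (p - 1) := by
      have := (rho2_le (p := p) (s := s) ⟨hp0, hp1⟩ ⟨hs0, hs1⟩).1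
      nlinarith [mul_nonneg (sq_nonneg s) hp0.le]
    refine pow_le_pow_left₀ hb0 ?_ _
    have := Real.add_one_le_exp (-(p * s ^ 2 * a))
    linarith
  refine (mul_le_mul_of_nonneg_left hbase (Real.exp_pos _).le).trans ?_
  rw [← Real.exp_add]
  refine Real.exp_le_exp.2 ?_
  have hz := mul_le_mul_of_nonneg_left (zetaF_le (s := s) hp0.le h0 hk hkn) hlam0
  rw [← hE] at hz
  have hchoose : (k.choose 2 : ℝ) = k * (k - 1) / 2 := Nat.cast_choose_two ℝ k
  have hps : 0 ≤ p * s ^ 2 := by positivity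
  have hps1 : p * s ^ 2 ≤ 1 := mul_le_one₀ hp1.le (by positivity) (pow_le_one₀ hs0 hs1)
  -- replace `k choose 2` by `k ^ 2 / 2`, at the cost of `k / 2`
  have hc : (k.choose 2 : ℝ) * (lam * (p * s ^ 2 * E)) - (k.choose 2 : ℝ) * (p * s ^ 2 * a) ≤
      k / 2 * (k * (p * s ^ 2) * (lam * E - a)) + k / 2 := by
    rw [hchoose]
    have e1 : 0 ≤ k * (lam * (p * s ^ 2 * E)) := by positivity
    have e2 : p * s ^ 2 * a ≤ 1 := mul_le_one₀ hps1 ha0 (by linarith)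
    have e3 : k * (p * s ^ 2 * a) ≤ k := mul_le_of_le_one_right hk0.le e2
    have e4 : (k : ℝ) * (k - 1) / 2 * (lam * (p * s ^ 2 * E)) -
        k * (k - 1) / 2 * (p * s ^ 2 * a) = k / 2 * (k * (p * s ^ 2) * (lam * E - a)) -
          k * (lam * (p * s ^ 2 * E)) / 2 + k * (p * s ^ 2 * a) / 2 := by ring
    linarith
  have hbr : Real.exp (-x) * (lam * E - a) ≤ h * (1 + ε / 8) := by
    have f1 := exp_tilt h0.le h1 hx
    have f2 := exp_small h0.le h1
    have f3 : Real.exp (-x) ≤ 1 := Real.exp_le_one_iff.2 (by linarith)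
    have f4 : 1 ≤ Real.exp t₀ := Real.one_le_exp h0.le
    have f5 : Real.exp (-x) * E ≤ Real.exp t₀ * (Real.exp (-x) + t₀) := by
      have := mul_le_mul_of_nonneg_left f1 (Real.exp_pos t₀).le
      rw [hEeq]; linarith
    have f6 : Real.exp (-x) * (lam * E) ≤ lam * (Real.exp t₀ * (Real.exp (-x) + t₀)) := by
      have := mul_le_mul_of_nonneg_left f5 hlam0
      linarith
    have f7 : a ≤ lam * Real.exp t₀ := by
      have := le_mul_of_one_le_right hlam0 f4
      linarith
    have f8 : Real.exp (-x) * (lam * Real.exp t₀ - a) ≤ lam * Real.exp t₀ - a :=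
      mul_le_of_le_one_left (by linarith) f3
    have f9 : lam * (Real.exp t₀ * (1 + t₀)) ≤ lam * (1 + 4 * t₀) := by gcongr
    have f10 : 4 * t₀ * lam ≤ 4 * t₀ * (C * h) := by gcongr
    have f11 : (4 * C + 1) * t₀ * h ≤ ε / 8 * h := by gcongr
    linarith
  have hbr2 : k * (p * s ^ 2) * (lam * E - a) ≤ (2 - 3 * ε / 4) * Real.log n := by
    have g1 : k * (p * s ^ 2) * (lam * E - a) =
        n * p * s ^ 2 * (Real.exp (-x) * (lam * E - a)) := by rw [← hy]; ring
    rw [g1]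
    have g0 : 0 ≤ Real.log n := Real.log_natCast_nonneg n
    calc _ ≤ n * p * s ^ 2 * (h * (1 + ε / 8)) := by gcongr
      _ = (n * p * s ^ 2 * h) * (1 + ε / 8) := by ring
      _ ≤ ((2 - ε) * Real.log n) * (1 + ε / 8) := by gcongr
      _ = (2 - 3 * ε / 4) * Real.log n - ε ^ 2 * Real.log n / 8 := by ring
      _ ≤ _ := by linarith [mul_nonneg (sq_nonneg ε) g0]
  have hfin := mul_le_mul_of_nonneg_left hbr2 (by positivity : (0 : ℝ) ≤ k / 2)
  linarith

/-- Average over permutations of the second moment bounds, split at `m` fixed points. -/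
theorem Hb_avg {n m : ℕ} {p s : ℝ} (hp : p ∈ Set.Ioo (0 : ℝ) 1) (hs : s ∈ Set.Icc (0 : ℝ) 1)
    (ζ : ℕ → ℝ) {G η θ : ℝ} (hm : 1 ≤ m)
    (hG : ∀ k, m ≤ k → k ≤ n → Real.exp (Real.log (1 / p) * ζ k) *
      (1 + rho2 p s + s ^ 2 * (p - 1)) ^ (k.choose 2) ≤ Real.exp (G * k))
    (hGm : G + 3 ≤ Real.log m) (hη1 : η ≤ 1) (hηm : rho2 p s * m ≤ η)
    (hη2 : rho2 p s + 2 * n * rho2 p s ^ 2 ≤ η)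
    (hθ : n * rho2 p s ^ 2 + n ^ 2 * rho2 p s ^ 3 ≤ θ)
    (hnm : (rho2 p s + 2 * n * rho2 p s ^ 2) * n + θ ≤ m) :
    (n.factorial : ℝ)⁻¹ * ∑ σ : Equiv.Perm (Fin n), Hb p s ζ m σ ≤
      Real.exp θ * (1 + η * Real.exp (Real.exp 2)) + 2 * Real.exp (-(m : ℝ)) := by
  classical
  have hn : (0 : ℝ) < n.factorial := by exact_mod_cast n.factorial_pos
  have hr := (rho2_le hp hs).1
  set r := rho2 p s with hrdef
  have hη0 : 0 ≤ η := le_trans (by positivity) hηm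
  have hcardfix : ∀ σ : Equiv.Perm (Fin n), (fixF σ).card ≤ n := fun σ => by
    simpa using Finset.card_le_univ (fixF σ)
  have hcardtwo : ∀ σ : Equiv.Perm (Fin n), (twoF σ).card ≤ n := fun σ => by
    simpa using Finset.card_le_univ (twoF σ)
  have hpt : ∀ σ : Equiv.Perm (Fin n), Hb p s ζ m σ ≤
      Real.exp θ * Real.exp (η * ((fixF σ).card + (twoF σ).card)) +
      (if m ≤ (fixF σ).card then Real.exp ((G + 1) * (fixF σ).card) else 0) := by
    intro σ
    unfold Hb
    have htwo : (((twoF σ).card : ℕ) : ℝ) ≤ n := by exact_mod_cast hcardtwo σ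
    rw [← hrdef]
    split_ifs with hk
    · have hk' : (m : ℝ) ≤ (((fixF σ).card : ℕ) : ℝ) := by exact_mod_cast hk
      refine le_trans ?_ (le_add_of_nonneg_left (by positivity))
      refine (mul_le_mul_of_nonneg_right (hG _ hk (hcardfix σ)) (Real.exp_pos _).le).trans ?_
      rw [← Real.exp_add]
      refine Real.exp_le_exp.2 ?_
      have : (r + 2 * n * r ^ 2) * (((twoF σ).card : ℕ) : ℝ) ≤ (r + 2 * n * r ^ 2) * n := by gcongr
      linarith
    · rw [add_zero, ← Real.exp_add]
      push Not at hk
      have hk' : (((fixF σ).card : ℕ) : ℝ) ≤ m := by exact_mod_cast hk.le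
      have h1 : (1 + r) ^ ((fixF σ).card.choose 2) ≤ Real.exp (η * (fixF σ).card) := by
        calc (1 + r) ^ ((fixF σ).card.choose 2) ≤ Real.exp r ^ ((fixF σ).card.choose 2) := by
              gcongr; linarith [Real.add_one_le_exp r]
          _ = Real.exp (((fixF σ).card.choose 2 : ℕ) * r) := by rw [Real.exp_nat_mul]
          _ ≤ _ := by
            refine Real.exp_le_exp.2 ?_
            rw [Nat.cast_choose_two]
            have k0 : (0 : ℝ) ≤ (((fixF σ).card : ℕ) : ℝ) := Nat.cast_nonneg _
            set K : ℝ := (((fixF σ).card : ℕ) : ℝ)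
            have q1 : r * K ≤ η := le_trans (by gcongr) hηm
            have q2 : K * (r * K) ≤ K * η := by gcongr
            have q3 : 0 ≤ K * (r * K) := by positivity
            have q4 : 0 ≤ K * r := by positivity
            nlinarith
      refine (mul_le_mul_of_nonneg_right h1 (Real.exp_pos _).le).trans ?_
      rw [← Real.exp_add]
      refine Real.exp_le_exp.2 ?_
      have : (r + 2 * n * r ^ 2) * (((twoF σ).card : ℕ) : ℝ) ≤ η * (twoF σ).card := by gcongr
      linarith
  have hsum := Finset.sum_le_sum fun σ (_ : σ ∈ (Finset.univ : Finset (Equiv.Perm (Fin n)))) => hpt σ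
  rw [Finset.sum_add_distrib, ← Finset.mul_sum] at hsum
  have hA := mgf_cycles (n := n) hη0 hη1
  have hB : ∑ σ : Equiv.Perm (Fin n),
      (if m ≤ (fixF σ).card then Real.exp ((G + 1) * (fixF σ).card) else 0) ≤
      n.factorial * (2 * Real.exp (-(m : ℝ))) := by
    calc _ ≤ ∑ σ : Equiv.Perm (Fin n), ∑ k ∈ Finset.range (n + 1),
          (if k ≤ (fixF σ).card then (if m ≤ k then Real.exp ((G + 1) * k) else 0) else 0) := by
          refine Finset.sum_le_sum fun σ _ => ?_
          refine le_trans (le_of_eq ?_) (Finset.single_le_sum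
            (f := fun k => if k ≤ (fixF σ).card then
              (if m ≤ k then Real.exp ((G + 1) * (k : ℝ)) else 0) else 0)
            (fun k _ => by split_ifs <;> positivity)
            (Finset.mem_range.2 (Nat.lt_succ_of_le (hcardfix σ))))
          simp
      _ = ∑ k ∈ Finset.range (n + 1), ((Finset.univ.filter fun σ : Equiv.Perm (Fin n) =>
            k ≤ (fixF σ).card).card : ℝ) * (if m ≤ k then Real.exp ((G + 1) * k) else 0) := by
          rw [Finset.sum_comm]
          refine Finset.sum_congr rfl fun k _ => ?_
          rw [← Finset.sum_filter, Finset.sum_const, nsmul_eq_mul]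
      _ ≤ ∑ k ∈ Finset.range (n + 1), n.factorial * (if m ≤ k then Real.exp (-(k : ℝ)) else 0) := by
          refine Finset.sum_le_sum fun k _ => ?_
          split_ifs with hmk
          · have hk0 : (0 : ℝ) < k := by exact_mod_cast hm.trans hmk
            have hf : (0 : ℝ) < k.factorial := by exact_mod_cast k.factorial_pos
            have h : (((Finset.univ.filter fun σ : Equiv.Perm (Fin n) =>
                k ≤ (fixF σ).card).card : ℕ) : ℝ) * k.factorial ≤ n.factorial := by
              have := card_fix_ge (n := n) k
              exact_mod_cast this
            have h2 : (k : ℝ) ^ k ≤ Real.exp k * k.factorial := by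
              have := Real.pow_div_factorial_le_exp (k : ℝ) hk0.le k
              rwa [div_le_iff₀ hf] at this
            have h3 : Real.exp ((G + 1) * k) ≤ Real.exp (-(k : ℝ)) * k.factorial := by
              have hlog : Real.log m ≤ Real.log k :=
                Real.log_le_log (by exact_mod_cast hm) (by exact_mod_cast hmk)
              have h4 : Real.exp ((G + 1) * k) ≤
                  Real.exp (-(k : ℝ)) * (Real.exp (-(k : ℝ)) * (k : ℝ) ^ k) := by
                have : (k : ℝ) ^ k = Real.exp (k * Real.log k) := by
                  rw [Real.exp_nat_mul, Real.exp_log hk0]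
                rw [this, ← Real.exp_add, ← Real.exp_add]
                refine Real.exp_le_exp.2 ?_
                nlinarith
              refine h4.trans (mul_le_mul_of_nonneg_left ?_ (Real.exp_pos _).le)
              calc _ ≤ Real.exp (-(k : ℝ)) * (Real.exp k * k.factorial) := by gcongr
                _ = k.factorial := by rw [← mul_assoc, ← Real.exp_add]; simp
            calc _ ≤ _ * (Real.exp (-(k : ℝ)) * k.factorial) :=
                  mul_le_mul_of_nonneg_left h3 (Nat.cast_nonneg _)
              _ = (_ * k.factorial) * Real.exp (-(k : ℝ)) := by ring
              _ ≤ _ := mul_le_mul_of_nonneg_right h (Real.exp_pos _).le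
          · simp
      _ ≤ _ := by
          rw [← Finset.mul_sum]
          exact mul_le_mul_of_nonneg_left (geom_tail m (n + 1)) hn.le
  rw [inv_mul_le_iff₀ hn] at hA ⊢
  have := mul_le_mul_of_nonneg_left hA (Real.exp_pos θ).le
  nlinarith

/-! ### Asymptotics -/

/-- For `p` bounded away from `1` the quantity `log (1/p) - 1 + p` is bounded below. -/
theorem h_lower {p δ : ℝ} (hp : p ∈ Set.Ioo (0 : ℝ) 1) (hδ : 0 < δ) (hpδ : p ≤ 1 - δ) :
    δ ^ 2 / 4 ≤ Real.log (1 / p) - 1 + p := by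
  obtain ⟨hp0, hp1⟩ := hp
  have hsq : Real.sqrt p ^ 2 = p := Real.sq_sqrt hp0.le
  have hs0 : 0 < Real.sqrt p := Real.sqrt_pos.2 hp0
  have h1 : Real.log p = 2 * Real.log (Real.sqrt p) := by
    conv_lhs => rw [← hsq]
    rw [Real.log_pow]; norm_num
  have h2 := Real.log_le_sub_one_of_pos hs0
  have hs1 : Real.sqrt p ≤ 1 := Real.sqrt_le_iff.2 ⟨zero_le_one, by linarith⟩
  rw [one_div, Real.log_inv, h1]
  have h3 : δ / 2 ≤ 1 - Real.sqrt p := by nlinarith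
  have h4 : (δ / 2) ^ 2 ≤ (1 - Real.sqrt p) ^ 2 := by gcongr
  nlinarith

/-- The bound on total variation at a fixed size `n`, for explicit truncation parameters. -/
theorem TV_finite {n m : ℕ} {p s ε C t₀ η θ : ℝ}
    (hp : p ∈ Set.Ioo (0 : ℝ) 1) (hs : s ∈ Set.Icc (0 : ℝ) 1) (hε : 0 < ε)
    (h0 : 0 < t₀) (h1 : t₀ ≤ 1 / 2) (hm : 1 ≤ m)
    (hh : 0 < Real.log (1 / p) - 1 + p)
    (hlam : Real.log (1 / p) ≤ C * (Real.log (1 / p) - 1 + p))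
    (htC : (4 * C + 1) * t₀ ≤ ε / 8) (hs6 : 6 * s ≤ 1)
    (hs6' : 6 * s ≤ t₀ * (Real.log (1 / p) - 1 + p))
    (hmain : n * p * s ^ 2 * (Real.log (1 / p) - 1 + p) ≤ (2 - ε) * Real.log n)
    (hGm : (1 - 3 * ε / 8) * Real.log n + 1 / 2 + 2 / t₀ * Real.log (1 / p) + 3 ≤ Real.log m)
    (hη1 : η ≤ 1) (hηm : rho2 p s * m ≤ η)
    (hη2 : rho2 p s + 2 * n * rho2 p s ^ 2 ≤ η)
    (hθ : n * rho2 p s ^ 2 + n ^ 2 * rho2 p s ^ 3 ≤ θ)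
    (hnm : (rho2 p s + 2 * n * rho2 p s ^ 2) * n + θ ≤ m) :
    TV (PER n p s) (QER n p s) ≤ 2 * Real.exp (-(m : ℝ)) +
      Real.sqrt (Real.exp θ * (1 + η * Real.exp (Real.exp 2)) + 2 * Real.exp (-(m : ℝ)) - 1 +
        2 * (2 * Real.exp (-(m : ℝ)))) := by
  refine TV_le hp hs (zetaF p s t₀ n) m _ _ ?_ ?_
  · refine bad_bound hp hs (zetaF p s t₀ n) (tk t₀ n) m hm
      (fun k hk hkn => (tk_pos h0 (hm.trans hk) hkn).le) (fun k hk hkn => le_of_eq ?_)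
    have := tk_pos h0 (hm.trans hk) hkn
    rw [zetaF, mul_div_cancel₀ _ this.ne']
  · refine (second_moment hp hs _ m).trans (Hb_avg hp hs _ hm (fun k hk hkn => ?_) hGm hη1 hηm hη2
      hθ hnm)
    exact large_k (hm.trans hk) hkn hp hs hε h0 h1 hh hlam htC hs6 hs6' hmain

set_option maxHeartbeats 1600000 in
/-- The result for `ε ≤ 1`, with the truncation split at `m = ⌈n ^ (1 - ε/16)⌉` fixed points. -/
theorem tendsto_core (ε : ℝ) (hε : 0 < ε) (hε1 : ε ≤ 1) (p s : ℕ → ℝ)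
    (hp : ∀ n, p n ∈ Set.Ioo (0 : ℝ) 1) (hs : ∀ n, s n ∈ Set.Icc (0 : ℝ) 1)
    (hbdd : ∃ δ : ℝ, 0 < δ ∧ ∀ n, p n ≤ 1 - δ)
    (hdense : Tendsto (fun n => Real.log (1 / p n) / Real.log n) atTop (nhds 0))
    (h : ∀ n : ℕ,
      (s n) ^ 2 ≤ (2 - ε) * Real.log n / ((n : ℝ) * p n * (Real.log (1 / p n) - 1 + p n))) :
    Tendsto (fun n => TV (PER n (p n) (s n)) (QER n (p n) (s n))) atTop (nhds 0) := by
  obtain ⟨δ, hδ, hpδ⟩ := hbdd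
  have hh : ∀ n, δ ^ 2 / 4 ≤ Real.log (1 / p n) - 1 + p n := fun n => h_lower (hp n) hδ (hpδ n)
  have hδ2 : 0 < δ ^ 2 / 4 := by positivity
  set C : ℝ := 1 + 4 / δ ^ 2 with hC
  have hC0 : 0 < C := by positivity
  have hlam : ∀ n, Real.log (1 / p n) ≤ C * (Real.log (1 / p n) - 1 + p n) := by
    intro n
    have h1 := mul_le_mul_of_nonneg_left (hh n) (by positivity : 0 ≤ 4 / δ ^ 2)
    have h2 : 4 / δ ^ 2 * (δ ^ 2 / 4) = 1 := by field_simp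
    have := (hp n).1
    rw [hC, add_mul]
    linarith
  set t₀ : ℝ := min (1 / 2) (ε / (8 * (4 * C + 1))) with ht₀
  have h0 : 0 < t₀ := lt_min (by norm_num) (by positivity)
  have h1 : t₀ ≤ 1 / 2 := min_le_left _ _
  have htC : (4 * C + 1) * t₀ ≤ ε / 8 := by
    have : t₀ ≤ ε / (8 * (4 * C + 1)) := min_le_right _ _
    calc (4 * C + 1) * t₀ ≤ (4 * C + 1) * (ε / (8 * (4 * C + 1))) := by gcongr
      _ = ε / 8 := by field_simp
  set κ : ℝ := min (ε / 64) (t₀ * ε / 32) with hκ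
  have hκ0 : 0 < κ := lt_min (by positivity) (by positivity)
  set c : ℝ := min (1 / 6) (t₀ * δ ^ 2 / 24) with hc
  have hc0 : 0 < c := lt_min (by norm_num) (by positivity)
  -- the vanishing scale `v n = n ^ (-ε/32)` and the split point `m n`
  set v : ℕ → ℝ := fun n => (n : ℝ) ^ (-(ε / 32)) with hv
  have hv0 : Tendsto v atTop (nhds 0) :=
    (tendsto_rpow_neg_atTop (by positivity)).comp tendsto_natCast_atTop_atTop
  set m : ℕ → ℕ := fun n => ⌈(n : ℝ) ^ (1 - ε / 16)⌉₊ with hm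
  have hm_top : Tendsto (fun n => ((m n : ℕ) : ℝ)) atTop atTop :=
    tendsto_atTop_mono (fun n => Nat.le_ceil _)
      ((tendsto_rpow_atTop (by linarith)).comp tendsto_natCast_atTop_atTop)
  have hE0 : Tendsto (fun n => Real.exp (-((m n : ℕ) : ℝ))) atTop (nhds 0) :=
    Real.tendsto_exp_neg_atTop_nhds_zero.comp hm_top
  have hlogtop : Tendsto (fun n : ℕ => Real.log n) atTop atTop :=
    Real.tendsto_log_atTop.comp tendsto_natCast_atTop_atTop
  have e1 : ∀ᶠ n : ℕ in atTop, Real.log (1 / p n) / Real.log n < κ :=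
    hdense.eventually_lt_const hκ0
  have e2 : ∀ᶠ n : ℕ in atTop, 14 / ε ≤ Real.log n := hlogtop.eventually_ge_atTop _
  have e3 : ∀ᶠ n : ℕ in atTop, 8 / δ ^ 2 * Real.log n ≤ (n : ℝ) ^ (ε / 64) := by
    have := (isLittleO_log_rpow_atTop (r := ε / 64) (by positivity)).bound
      (c := δ ^ 2 / 8) (by positivity)
    have := tendsto_natCast_atTop_atTop.eventually this
    filter_upwards [this] with n hn
    rw [Real.norm_of_nonneg (Real.log_natCast_nonneg n),
      Real.norm_of_nonneg (by positivity)] at hn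
    calc 8 / δ ^ 2 * Real.log n ≤ 8 / δ ^ 2 * (δ ^ 2 / 8 * (n : ℝ) ^ (ε / 64)) := by gcongr
      _ = _ := by field_simp
  have e4 : ∀ᶠ n in atTop, v n < min (1 / 5) (c ^ 2) :=
    hv0.eventually_lt_const (lt_min (by norm_num) (by positivity))
  have e5 : ∀ᶠ n : ℕ in atTop, (25 : ℝ) ≤ n := tendsto_natCast_atTop_atTop.eventually_ge_atTop _
  have key : ∀ᶠ n : ℕ in atTop, TV (PER n (p n) (s n)) (QER n (p n) (s n)) ≤
      2 * Real.exp (-((m n : ℕ) : ℝ)) +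
      Real.sqrt (Real.exp (2 * v n) * (1 + 5 * v n * Real.exp (Real.exp 2)) +
        2 * Real.exp (-((m n : ℕ) : ℝ)) - 1 + 2 * (2 * Real.exp (-((m n : ℕ) : ℝ)))) := by
    filter_upwards [e1, e2, e3, e4, e5] with n h1' h2' h3' h4' h5'
    have hn0 : (0 : ℝ) < n := by linarith
    have hn1 : (1 : ℝ) ≤ n := by linarith
    have hlog0 : 0 < Real.log n := lt_of_lt_of_le (by positivity) h2'
    have hp0 := (hp n).1
    have hs0 := (hs n).1
    have hhn := hh n
    have hhn0 : 0 < Real.log (1 / p n) - 1 + p n := by linarith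
    have hlamκ : Real.log (1 / p n) ≤ κ * Real.log n := by
      rw [div_lt_iff₀ hlog0] at h1'; exact h1'.le
    have hmono : ∀ {a b : ℝ}, a ≤ b → (n : ℝ) ^ a ≤ (n : ℝ) ^ b := fun hab =>
      Real.rpow_le_rpow_of_exponent_le hn1 hab
    have hden : 0 < (n : ℝ) * p n * (Real.log (1 / p n) - 1 + p n) := by positivity
    have hmain : n * p n * s n ^ 2 * (Real.log (1 / p n) - 1 + p n) ≤ (2 - ε) * Real.log n := by
      have := h n
      rw [le_div_iff₀ hden] at this
      linarith
    -- `s² ≤ n ^ (ε/32 - 1)`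
    have hinvp : 1 / p n ≤ (n : ℝ) ^ (ε / 64) := by
      rw [← Real.exp_log (by positivity : 0 < 1 / p n), Real.rpow_def_of_pos hn0]
      refine Real.exp_le_exp.2 (hlamκ.trans ?_)
      rw [mul_comm]
      exact mul_le_mul_of_nonneg_left (min_le_left _ _) hlog0.le
    have hsR : s n ^ 2 ≤ (n : ℝ) ^ (ε / 32 - 1) := by
      have a1 : n * p n * s n ^ 2 * (δ ^ 2 / 4) ≤ 2 * Real.log n := by
        have : n * p n * s n ^ 2 * (δ ^ 2 / 4) ≤
          n * p n * s n ^ 2 * (Real.log (1 / p n) - 1 + p n) := by gcongr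
        nlinarith
      have a2 : s n ^ 2 = (n * p n * s n ^ 2 * (δ ^ 2 / 4)) * (4 / δ ^ 2 * (1 / p n) / n) := by
        field_simp
      calc s n ^ 2 = (n * p n * s n ^ 2 * (δ ^ 2 / 4)) * (4 / δ ^ 2 * (1 / p n) / n) := a2
        _ ≤ (2 * Real.log n) * (4 / δ ^ 2 * (n : ℝ) ^ (ε / 64) / n) := by gcongr
        _ = (8 / δ ^ 2 * Real.log n) * (n : ℝ) ^ (ε / 64) / n := by ring
        _ ≤ (n : ℝ) ^ (ε / 64) * (n : ℝ) ^ (ε / 64) / n := by gcongr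
        _ = _ := by
          rw [← Real.rpow_add hn0, Real.rpow_sub_one hn0.ne']; congr 2; ring
    have hr0 := (rho2_le (hp n) (hs n)).1
    have hrR : rho2 (p n) (s n) ≤ (n : ℝ) ^ (ε / 32 - 1) := (rho2_le (hp n) (hs n)).2.1.trans hsR
    set r := rho2 (p n) (s n) with hr
    have hvn : v n = (n : ℝ) ^ (-(ε / 32)) := rfl
    have hv00 : 0 ≤ v n := by rw [hvn]; positivity
    have hmge : (n : ℝ) ^ (1 - ε / 16) ≤ m n := Nat.le_ceil _
    have hX1 : 1 ≤ (n : ℝ) ^ (1 - ε / 16) := Real.one_le_rpow hn1 (by linarith)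
    have hmle : (m n : ℝ) ≤ 2 * (n : ℝ) ^ (1 - ε / 16) := by
      have := (Nat.ceil_lt_add_one (by positivity : 0 ≤ (n : ℝ) ^ (1 - ε / 16))).le
      have h' : (m n : ℝ) ≤ (n : ℝ) ^ (1 - ε / 16) + 1 := this
      linarith
    have hm1 : 1 ≤ m n := by
      have : (1 : ℝ) ≤ m n := hX1.trans hmge
      exact_mod_cast this
    have hv1 : v n ≤ 1 / 5 := h4'.le.trans (min_le_left _ _)
    have hRv : (n : ℝ) ^ (ε / 32 - 1) ≤ v n := hmono (by linarith)
    -- powers of `n ^ (ε/32 - 1)` against powers of `n`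
    have hR2 : n * ((n : ℝ) ^ (ε / 32 - 1)) ^ 2 = (n : ℝ) ^ (ε / 16 - 1) := by
      rw [← Real.rpow_natCast, ← Real.rpow_mul hn0.le, mul_comm, ← Real.rpow_add_one hn0.ne']
      congr 1; push_cast; ring
    have hR3 : n ^ 2 * ((n : ℝ) ^ (ε / 32 - 1)) ^ 3 = (n : ℝ) ^ (3 * ε / 32 - 1) := by
      rw [← Real.rpow_natCast, ← Real.rpow_natCast, ← Real.rpow_mul hn0.le, ← Real.rpow_add hn0]
      congr 1; push_cast; ring
    have hb2 : n * r ^ 2 ≤ (n : ℝ) ^ (ε / 16 - 1) := by rw [← hR2]; gcongr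
    have hb3 : n ^ 2 * r ^ 3 ≤ (n : ℝ) ^ (3 * ε / 32 - 1) := by rw [← hR3]; gcongr
    have hb2v : (n : ℝ) ^ (ε / 16 - 1) ≤ v n := hmono (by linarith)
    have hb3v : (n : ℝ) ^ (3 * ε / 32 - 1) ≤ v n := hmono (by linarith)
    have hsc : s n ≤ c := by
      refine abs_le_of_sq_le_sq' ?_ hc0.le |>.2
      exact hsR.trans (hRv.trans (h4'.le.trans (min_le_right _ _)))
    refine TV_finite (C := C) (t₀ := t₀) (hp n) (hs n) hε h0 h1 hm1 hhn0 (hlam n) htC ?_ ?_ hmain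
      ?_ ?_ ?_ ?_ ?_ ?_
    · have : c ≤ 1 / 6 := min_le_left _ _
      linarith
    · have a1 : c ≤ t₀ * δ ^ 2 / 24 := min_le_right _ _
      have a2 : t₀ * (δ ^ 2 / 4) ≤ t₀ * (Real.log (1 / p n) - 1 + p n) := by gcongr
      linarith
    · have a1 : (1 - ε / 16) * Real.log n ≤ Real.log (m n) := by
        rw [← Real.log_rpow hn0]
        exact Real.log_le_log (by positivity) hmge
      have a2 : 2 / t₀ * Real.log (1 / p n) ≤ ε / 16 * Real.log n := by
        calc 2 / t₀ * Real.log (1 / p n) ≤ 2 / t₀ * (κ * Real.log n) := by gcongr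
          _ ≤ 2 / t₀ * (t₀ * ε / 32 * Real.log n) := by
            gcongr
            exact min_le_right _ _
          _ = _ := by field_simp; norm_num
      have a3 : 14 ≤ ε * Real.log n := by
        rw [div_le_iff₀ hε] at h2'; linarith
      linarith
    · linarith
    · calc r * m n ≤ (n : ℝ) ^ (ε / 32 - 1) * (2 * (n : ℝ) ^ (1 - ε / 16)) := by gcongr
        _ = 2 * v n := by
          rw [mul_left_comm, ← Real.rpow_add hn0, hvn]; congr 2; ring
        _ ≤ _ := by linarith
    · linarith
    · linarith
    · have a1 : (n : ℝ) ^ (ε / 32 - 1) * n ≤ (n : ℝ) ^ (ε / 16) := by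
        rw [← Real.rpow_add_one hn0.ne']
        exact hmono (by linarith)
      have a2 : (n : ℝ) ^ (ε / 16 - 1) * n = (n : ℝ) ^ (ε / 16) := by
        rw [← Real.rpow_add_one hn0.ne']; congr 1; ring
      have a3 : 5 ≤ (n : ℝ) ^ (1 / 2 : ℝ) := by
        rw [← Real.sqrt_eq_rpow]
        exact Real.le_sqrt_of_sq_le (by linarith)
      have a4 : 5 * (n : ℝ) ^ (ε / 16) ≤ (n : ℝ) ^ (1 - ε / 16) := by
        calc 5 * (n : ℝ) ^ (ε / 16) ≤ (n : ℝ) ^ (1 / 2 : ℝ) * (n : ℝ) ^ (ε / 16) := by gcongr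
          _ = (n : ℝ) ^ (1 / 2 + ε / 16) := by rw [← Real.rpow_add hn0]
          _ ≤ _ := hmono (by linarith)
      have a5 : 1 ≤ (n : ℝ) ^ (ε / 16) := Real.one_le_rpow hn1 (by positivity)
      have a6 : r * n ≤ (n : ℝ) ^ (ε / 32 - 1) * n := by gcongr
      have a7 : n * r ^ 2 * n ≤ (n : ℝ) ^ (ε / 16 - 1) * n := by gcongr
      have a8 : (r + 2 * n * r ^ 2) * n = r * n + 2 * (n * r ^ 2 * n) := by ring
      linarith
  refine tendsto_of_tendsto_of_tendsto_of_le_of_le' tendsto_const_nhds ?_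
    (Eventually.of_forall fun n => TV_nonneg _ _) key
  have hlim : Tendsto (fun n => 2 * Real.exp (-((m n : ℕ) : ℝ)) +
      Real.sqrt (Real.exp (2 * v n) * (1 + 5 * v n * Real.exp (Real.exp 2)) +
        2 * Real.exp (-((m n : ℕ) : ℝ)) - 1 + 2 * (2 * Real.exp (-((m n : ℕ) : ℝ)))))
      atTop (nhds (2 * 0 + Real.sqrt (Real.exp (2 * 0) * (1 + 5 * 0 * Real.exp (Real.exp 2)) +
        2 * 0 - 1 + 2 * (2 * 0)))) := by
    have hA : Tendsto (fun n => Real.exp (2 * v n)) atTop (nhds (Real.exp (2 * 0))) :=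
      (Real.continuous_exp.tendsto _).comp (hv0.const_mul 2)
    have hB : Tendsto (fun n => 1 + 5 * v n * Real.exp (Real.exp 2)) atTop
        (nhds (1 + 5 * 0 * Real.exp (Real.exp 2))) :=
      ((hv0.const_mul 5).mul_const _).const_add 1
    exact (hE0.const_mul 2).add ((((hA.mul hB).add (hE0.const_mul 2)).sub_const 1).add
      ((hE0.const_mul 2).const_mul 2)).sqrt
  simpa using hlim

/-- Theorem 2 of the paper, dense converse: in the correlated Erdős–Rényi
detection problem with dense parent graph (`p_n` bounded away from 1 and `p_n = n^{-o(1)}`), for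
every fixed `ε > 0`, if `s_n² ≤ (2-ε) log n / (n p_n (log(1/p_n) - 1 + p_n))` for all `n`, then
`TV(P_{n,p_n,s_n}, Q_{n,p_n,s_n}) → 0`, i.e. even weak detection is impossible. -/
theorem stmt3 (ε : ℝ) (hε : 0 < ε) (p s : ℕ → ℝ)
    (hp : ∀ n, p n ∈ Set.Ioo (0 : ℝ) 1) (hs : ∀ n, s n ∈ Set.Icc (0 : ℝ) 1)
    (hbdd : ∃ δ : ℝ, 0 < δ ∧ ∀ n, p n ≤ 1 - δ)
    (hdense : Tendsto (fun n => Real.log (1 / p n) / Real.log n) atTop (nhds 0))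
    (h : ∀ n : ℕ,
      (s n) ^ 2 ≤ (2 - ε) * Real.log n / ((n : ℝ) * p n * (Real.log (1 / p n) - 1 + p n))) :
    Tendsto (fun n => TV (PER n (p n) (s n)) (QER n (p n) (s n))) atTop (nhds 0) := by
  obtain ⟨δ, hδ, hpδ⟩ := hbdd
  refine tendsto_core (min ε 1) (lt_min hε one_pos) (min_le_right _ _) p s hp hs ⟨δ, hδ, hpδ⟩ hdense
    fun n => (h n).trans ?_
  have h1 : 0 ≤ Real.log (1 / p n) - 1 + p n :=
    le_trans (by positivity) (h_lower (hp n) hδ (hpδ n))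
  have h2 := (hp n).1
  have h3 := Real.log_natCast_nonneg n
  gcongr
  exact min_le_left _ _

end
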